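/- There is an absolute constant c > 0 such that the following holds. Let k, n be positive integers with n ≥ 2, let δ, ε > 0, and let C : {-1,1}^k → {-1,1}^n be a (3, δ, ε)-normally decodable code. Then k^3 ≤ c · n · (log n)^6 / (ε^16 · δ^16). -/

import Mathlib

open Finset
open scoped Classical

noncomputable section

/-- The map sending a Boolean to the corresponding element of `{-1, 1} ⊆ ℝ`. -/
def pmo (b : Bool) : ℝ := if b then 1 else -1

/-- `H` is a `q`-uniform hypergraph matching on `[n]`: every hyperedge has exactly `q`
elements and distinct hyperedges are disjoint. -/
def IsMatching {n : ℕ} (q : ℕ) (H : Finset (Finset (Fin n))) : Prop :=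
  (∀ C ∈ H, C.card = q) ∧ Set.Pairwise (H : Set (Finset (Fin n))) Disjoint

/-- A code `Enc : {-1,1}^k → {-1,1}^n` (with `±1` vectors represented by Boolean vectors
via `pmo`) is `(q, δ, ε)`-normally decodable: for each `i ∈ [k]` there is a `q`-uniform
hypergraph matching `H i` on `[n]` with `|H i| ≥ δn` such that for every hyperedge
`C ∈ H i`, `Pr_{b uniform}[b i = ∏_{v ∈ C} Enc(b) v] ≥ 1/2 + ε`. -/
def NormallyDecodable (q k n : ℕ) (δ ε : ℝ)
    (Enc : (Fin k → Bool) → Fin n → Bool) : Prop :=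
  ∃ H : Fin k → Finset (Finset (Fin n)),
    (∀ i, IsMatching q (H i)) ∧
    (∀ i, δ * n ≤ ((H i).card : ℝ)) ∧
    (∀ i, ∀ C ∈ H i,
      (1 / 2 + ε : ℝ) ≤
        ((Finset.univ.filter (fun b : Fin k → Bool =>
          pmo (b i) = ∏ v ∈ C, pmo (Enc b v))).card : ℝ) / 2 ^ k)

open scoped BigOperators Matrix symmDiff

/-!
Every edge of a normal decoder correlates with the bit it decodes, so the symmetric 3-tensors `hᵢ`
weighting the ordered edges of the matchings have `𝔼 b, ∑ i, bᵢ · hᵢ(x b) ≥ δ ε n k`, where `hᵢ(x)`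
is the cubic form of `hᵢ` at the encoded word `x b`. The bound on `k` comes from the opposite
inequality. If a triple contains a pair of large codegree, the tensors are matrices indexed by
vertices and pairs, and a signed sum of matrices is bounded by matrix Khintchine. On the remaining
light triples, Cauchy-Schwarz over the first vertex produces quartic forms
`∑ i j, bᵢ bⱼ ∑ u, hᵢ(u, ·, ·) hⱼ(u, ·, ·)`; after a random bipartition of the bits the indices `j`
of one side are absorbed in the coefficients, and the quartic forms become quadratic forms of
Kikuchi matrices, indexed by pairs of `ℓ`-tuples of vertices with `ℓ² ≈ n / k`. These matrices have
a few rows which are too heavy for Khintchine; truncating them costs only a second moment of the row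
sums, which the codegree bound controls.
-/

lemma pmo_mul_self (b : Bool) : pmo b * pmo b = 1 := by cases b <;> simp [pmo]

lemma abs_pmo (b : Bool) : |pmo b| = 1 := by cases b <;> simp [pmo]

section Signs

variable {ι : Type*} [DecidableEq ι]

lemma symmDiff_singleton_of_mem {O : Finset ι} {i : ι} (hi : i ∈ O) : O ∆ {i} = O.erase i := by
  rw [symmDiff_of_ge (singleton_subset_iff.mpr hi), sdiff_singleton_eq_erase]

lemma symmDiff_singleton_of_notMem {O : Finset ι} {i : ι} (hi : i ∉ O) :
    O ∆ {i} = insert i O := by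
  rw [(disjoint_singleton_right.mpr hi).symmDiff_eq_sup, sup_eq_union, union_comm, ← insert_eq]

lemma prod_pmo_mul_pmo (O : Finset ι) (i : ι) (b : ι → Bool) :
    (∏ j ∈ O, pmo (b j)) * pmo (b i) = ∏ j ∈ O ∆ {i}, pmo (b j) := by
  by_cases hi : i ∈ O
  · rw [symmDiff_singleton_of_mem hi, ← prod_erase_mul O _ hi, mul_assoc, pmo_mul_self, mul_one]
  · rw [symmDiff_singleton_of_notMem hi, prod_insert hi, mul_comm]

variable [Fintype ι]

lemma expect_prod_pmo (O : Finset ι) :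
    𝔼 b : ι → Bool, ∏ i ∈ O, pmo (b i) = if O = ∅ then 1 else 0 := by
  split_ifs with hO
  · simp [hO]
  · obtain ⟨i, hi⟩ := nonempty_iff_ne_empty.mpr hO
    have hprod (b : ι → Bool) : ∏ j ∈ O, pmo (b j) = ∏ j, if j ∈ O then pmo (b j) else 1 := by
      rw [prod_ite_mem, univ_inter]
    rw [Fintype.expect_eq_sum_div_card, sum_congr rfl fun b _ ↦ hprod b,
      ← Fintype.prod_sum fun j c ↦ if j ∈ O then pmo c else 1,
      prod_eq_zero (mem_univ i) (by simp [hi, pmo]), zero_div]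

lemma expect_pmo_mul_pmo (i j : ι) :
    𝔼 b : ι → Bool, pmo (b i) * pmo (b j) = if i = j then 1 else 0 := by
  simpa [← prod_pmo_mul_pmo, symmDiff_eq_bot, ← bot_eq_empty] using
    expect_prod_pmo (ι := ι) ({i} ∆ {j})

end Signs

/-- The matrix `∑ bᵢ Bᵢ`, random when the signs `b` are. -/
def signedSum {ι m n : Type*} [Fintype ι] (B : ι → Matrix m n ℝ) (b : ι → Bool) : Matrix m n ℝ :=
  ∑ i, pmo (b i) • B i

lemma signedSum_apply {ι m n : Type*} [Fintype ι] (B : ι → Matrix m n ℝ) (b : ι → Bool)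
    (v : m) (w : n) : signedSum B b v w = ∑ i, pmo (b i) * B i v w := by
  simp [signedSum, Matrix.sum_apply]

lemma isSymm_signedSum {ι V : Type*} [Fintype ι] {A : ι → Matrix V V ℝ}
    (hA : ∀ i, (A i).IsSymm) (b : ι → Bool) : (signedSum A b).IsSymm := by
  simp only [signedSum, Matrix.IsSymm, Matrix.transpose_sum, Matrix.transpose_smul, (hA _).eq]

lemma dotProduct_signedSum_mulVec {ι m n : Type*} [Fintype ι] [Fintype m] [Fintype n]
    (B : ι → Matrix m n ℝ) (b : ι → Bool) (x : m → ℝ) (y : n → ℝ) :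
    x ⬝ᵥ signedSum B b *ᵥ y = ∑ i, pmo (b i) * (x ⬝ᵥ B i *ᵥ y) := by
  simp [signedSum, Matrix.sum_mulVec, Matrix.smul_mulVec, dotProduct_sum]

lemma sum_abs_mul_apply_le {l m n : Type*} [Fintype m] [Fintype n] (M : Matrix l m ℝ)
    (N : Matrix m n ℝ) (v : l) :
    ∑ w, |(M * N) v w| ≤ ∑ u, |M v u| * ∑ w, |N u w| := by
  calc ∑ w, |(M * N) v w| ≤ ∑ w, ∑ u, |M v u| * |N u w| := by
        gcongr with w
        simpa only [Matrix.mul_apply, abs_mul] using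
          abs_sum_le_sum_abs (fun u ↦ M v u * N u w) univ
    _ = ∑ u, |M v u| * ∑ w, |N u w| := by
        simp_rw [mul_sum]
        exact sum_comm

section SignedMoment

variable {ι V : Type*} [Fintype ι] [DecidableEq ι] [Fintype V] [DecidableEq V]

/-- The Fourier coefficient at `O` of the `r`-th power of a signed sum. It counts the walks of
length `r` whose steps use exactly the colours of `O` an odd number of times. -/
def signedMoment (P : ι → Matrix V V ℝ) (O : Finset ι) (r : ℕ) : Matrix V V ℝ :=
  𝔼 b : ι → Bool, (∏ j ∈ O, pmo (b j)) • signedSum P b ^ r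

lemma signedMoment_zero (P : ι → Matrix V V ℝ) (O : Finset ι) :
    signedMoment P O 0 = if O = ∅ then 1 else 0 := by
  simp_rw [signedMoment, pow_zero, expect, ← sum_smul, ← smul_assoc]
  rw [← expect, expect_prod_pmo, ite_smul, one_smul, zero_smul]

lemma signedMoment_succ (P : ι → Matrix V V ℝ) (O : Finset ι) (r : ℕ) :
    signedMoment P O (r + 1) = ∑ i, P i * signedMoment P (O ∆ {i}) r := by
  simp only [signedMoment, mul_expect, ← expect_sum_comm]
  refine expect_congr rfl fun b _ ↦ ?_
  rw [pow_succ', signedSum, sum_mul, smul_sum]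
  refine sum_congr rfl fun i _ ↦ ?_
  rw [← prod_pmo_mul_pmo, smul_mul_assoc, smul_smul, mul_smul_comm]

lemma sum_abs_signedMoment_succ_le (P : ι → Matrix V V ℝ) (O : Finset ι) (r : ℕ) (v : V) :
    ∑ w, |signedMoment P O (r + 1) v w| ≤
      ∑ i, ∑ u, |P i v u| * ∑ w, |signedMoment P (O ∆ {i}) r u w| := by
  calc ∑ w, |signedMoment P O (r + 1) v w|
      ≤ ∑ w, ∑ i, |(P i * signedMoment P (O ∆ {i}) r) v w| := by
        gcongr with w
        rw [signedMoment_succ, Matrix.sum_apply]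
        exact abs_sum_le_sum_abs _ _
    _ ≤ _ := by
        rw [sum_comm]
        exact sum_le_sum fun i _ ↦ sum_abs_mul_apply_le _ _ v

/-- A step of a walk either repeats a colour of `O`, which costs `θ`, or uses a new colour; all the
new colours together cost `1`. -/
lemma sum_abs_signedMoment_succ_le_of_le {P : ι → Matrix V V ℝ} {θ a c : ℝ} {O : Finset ι} {r : ℕ}
    (ha : 0 ≤ a) (hc : 0 ≤ c) (hcol : ∀ i v, ∑ w, |P i v w| ≤ θ)
    (htot : ∀ v, ∑ i, ∑ w, |P i v w| ≤ 1)
    (hold : ∀ i ∈ O, ∀ u, ∑ w, |signedMoment P (O.erase i) r u w| ≤ a)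
    (hnew : ∀ i ∉ O, ∀ u, ∑ w, |signedMoment P (insert i O) r u w| ≤ c) (v : V) :
    ∑ w, |signedMoment P O (r + 1) v w| ≤ #O * (θ * a) + c := by
  calc ∑ w, |signedMoment P O (r + 1) v w|
      ≤ ∑ i, ∑ u, |P i v u| * ∑ w, |signedMoment P (O ∆ {i}) r u w| :=
        sum_abs_signedMoment_succ_le P O r v
    _ ≤ ∑ _i ∈ O, θ * a + ∑ i ∈ Oᶜ, (∑ u, |P i v u|) * c := by
        rw [← sum_add_sum_compl O]
        refine add_le_add (sum_le_sum fun i hi ↦ ?_) (sum_le_sum fun i hi ↦ ?_)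
        · rw [symmDiff_singleton_of_mem hi]
          calc ∑ u, |P i v u| * ∑ w, |signedMoment P (O.erase i) r u w|
              ≤ ∑ u, |P i v u| * a := by gcongr with u; exact hold i hi u
            _ ≤ θ * a := by rw [← sum_mul]; gcongr; exact hcol i v
        · rw [mem_compl] at hi
          rw [symmDiff_singleton_of_notMem hi, sum_mul]
          gcongr with u
          exact hnew i hi u
    _ ≤ #O * (θ * a) + c := by
        rw [sum_const, nsmul_eq_mul, ← sum_mul]
        gcongr
        exact mul_le_of_le_one_left hc ((sum_le_sum_of_subset_of_nonneg (subset_univ _)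
          fun i _ _ ↦ by positivity).trans (htot v))

lemma sum_abs_signedMoment_le {P : ι → Matrix V V ℝ} {θ s : ℝ} {R : ℕ} (hs : 0 ≤ s)
    (hRθ : R * θ ≤ s ^ 2) (hθ : 0 ≤ θ) (hcol : ∀ i v, ∑ w, |P i v w| ≤ θ)
    (htot : ∀ v, ∑ i, ∑ w, |P i v w| ≤ 1) (r : ℕ) (O : Finset ι) (hO : r + #O ≤ R) (v : V) :
    ∑ w, |signedMoment P O r v w| ≤ 2 ^ r * s ^ (r + #O) := by
  induction r generalizing O v with
  | zero =>
    rw [signedMoment_zero]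
    split_ifs with h
    · simp [h, Matrix.one_apply, apply_ite abs]
    · simp [pow_nonneg hs]
  | succ r ih =>
    have hrepeat : #O * (θ * (2 ^ r * s ^ (r + (#O - 1)))) ≤ 2 ^ r * s ^ (r + 1 + #O) := by
      obtain hO0 | hO0 := Nat.eq_zero_or_pos (#O)
      · simp only [hO0, Nat.cast_zero, zero_mul]
        positivity
      calc #O * (θ * (2 ^ r * s ^ (r + (#O - 1))))
          ≤ R * (θ * (2 ^ r * s ^ (r + (#O - 1)))) := by gcongr; omega
        _ ≤ s ^ 2 * (2 ^ r * s ^ (r + (#O - 1))) := by rw [← mul_assoc]; gcongr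
        _ = 2 ^ r * s ^ (r + 1 + #O) := by
            rw [show r + 1 + #O = 2 + (r + (#O - 1)) by omega, pow_add]
            ring
    calc ∑ w, |signedMoment P O (r + 1) v w|
        ≤ #O * (θ * (2 ^ r * s ^ (r + (#O - 1)))) + 2 ^ r * s ^ (r + (#O + 1)) := by
          refine sum_abs_signedMoment_succ_le_of_le (by positivity) (by positivity) hcol htot
            (fun i hi u ↦ ?_) (fun i hi u ↦ ?_) v
          · rw [← card_erase_of_mem hi]
            exact ih _ (by rw [card_erase_of_mem hi]; omega) u
          · rw [← card_insert_of_notMem hi]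
            exact ih _ (by rw [card_insert_of_notMem hi]; omega) u
      _ ≤ 2 ^ r * s ^ (r + 1 + #O) + 2 ^ r * s ^ (r + 1 + #O) := by
          rw [← add_assoc, add_right_comm r]
          gcongr
      _ = 2 ^ (r + 1) * s ^ (r + 1 + #O) := by ring

lemma trace_expect_signedSum_pow_le {P : ι → Matrix V V ℝ} {θ : ℝ} (R : ℕ) (hθ : 0 ≤ θ)
    (hcol : ∀ i v, ∑ w, |P i v w| ≤ θ) (htot : ∀ v, ∑ i, ∑ w, |P i v w| ≤ 1) :
    𝔼 b, (signedSum P b ^ R).trace ≤ Fintype.card V * (2 * √(R * θ)) ^ R := by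
  have htrace : 𝔼 b, (signedSum P b ^ R).trace = (signedMoment P ∅ R).trace := by
    simpa [signedMoment] using (map_expect (Matrix.traceLinearMap V ℚ≥0 ℝ) _ _).symm
  rw [htrace, Matrix.trace, ← nsmul_eq_mul, ← card_univ]
  refine sum_le_card_nsmul _ _ _ fun v _ ↦ ?_
  calc signedMoment P ∅ R v v ≤ ∑ w, |signedMoment P ∅ R v w| :=
        (le_abs_self _).trans (single_le_sum (f := fun w ↦ |signedMoment P ∅ R v w|)
          (fun _ _ ↦ abs_nonneg _) (mem_univ v))
    _ ≤ 2 ^ R * √(R * θ) ^ (R + #(∅ : Finset ι)) :=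
        sum_abs_signedMoment_le (Real.sqrt_nonneg _) (Real.sq_sqrt (by positivity)).ge hθ
          hcol htot R ∅ (by simp) v
    _ = (2 * √(R * θ)) ^ R := by rw [card_empty, add_zero, mul_pow]

end SignedMoment

section QuadraticForm

variable {V : Type*} [Fintype V] [DecidableEq V]

lemma trace_pow_eq_sum_eigenvalues_pow {B : Matrix V V ℝ} (hB : B.IsHermitian) (R : ℕ) :
    (B ^ R).trace = ∑ j, hB.eigenvalues j ^ R := by
  conv_lhs => rw [hB.spectral_theorem]
  rw [← map_pow, Unitary.conjStarAlgAut_apply, Matrix.trace_mul_cycle, Unitary.coe_star_mul_self,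
    one_mul, Matrix.diagonal_pow, Matrix.trace_diagonal]
  rfl

lemma exists_dotProduct_mulVec_eq_sum_eigenvalues {B : Matrix V V ℝ} (hB : B.IsHermitian)
    (x : V → ℝ) :
    ∃ c : V → ℝ, ∑ j, c j ^ 2 = x ⬝ᵥ x ∧ x ⬝ᵥ B *ᵥ x = ∑ j, hB.eigenvalues j * c j ^ 2 := by
  set U : Matrix V V ℝ := (hB.eigenvectorUnitary : Matrix V V ℝ)
  have hU : U * Uᵀ = 1 := Unitary.coe_mul_star_self hB.eigenvectorUnitary
  have hspec : B = U * Matrix.diagonal hB.eigenvalues * Uᵀ := hB.spectral_theorem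
  refine ⟨Uᵀ *ᵥ x, ?_, ?_⟩
  · calc ∑ j, (Uᵀ *ᵥ x) j ^ 2 = (Uᵀ *ᵥ x) ⬝ᵥ (Uᵀ *ᵥ x) := by simp only [dotProduct, sq]
      _ = x ⬝ᵥ x := by
        rw [Matrix.mulVec_transpose, ← Matrix.dotProduct_mulVec, ← Matrix.mulVec_transpose,
          Matrix.mulVec_mulVec, hU, Matrix.one_mulVec]
  · conv_lhs => rw [hspec]
    rw [← Matrix.mulVec_mulVec, ← Matrix.mulVec_mulVec, Matrix.dotProduct_mulVec,
      ← Matrix.mulVec_transpose, dotProduct]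
    refine sum_congr rfl fun j _ ↦ ?_
    rw [Matrix.mulVec_diagonal]
    ring

lemma dotProduct_mulVec_pow_le_trace {B : Matrix V V ℝ} (hB : B.IsSymm) {R : ℕ} (hR : Even R)
    (hR0 : R ≠ 0) {x : V → ℝ} {G : ℝ} (hx : x ⬝ᵥ x ≤ G) :
    (x ⬝ᵥ B *ᵥ x) ^ R ≤ G ^ R * (B ^ R).trace := by
  have hH : B.IsHermitian := by
    rwa [Matrix.IsHermitian, Matrix.conjTranspose_eq_transpose_of_trivial]
  obtain ⟨c, hc, hq⟩ := exists_dotProduct_mulVec_eq_sum_eigenvalues hH x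
  rw [trace_pow_eq_sum_eigenvalues_pow hH, hq]
  rw [← hc] at hx
  have hG : 0 ≤ G := le_trans (by positivity) hx
  rcases isEmpty_or_nonempty V with _ | _
  · simp [hR0]
  obtain ⟨j, -, hj⟩ := exists_max_image univ (fun j ↦ |hH.eigenvalues j|) univ_nonempty
  calc (∑ j, hH.eigenvalues j * c j ^ 2) ^ R = |∑ j, hH.eigenvalues j * c j ^ 2| ^ R :=
        (hR.pow_abs _).symm
    _ ≤ (∑ l, |hH.eigenvalues j| * c l ^ 2) ^ R := by
        gcongr
        refine (abs_sum_le_sum_abs _ _).trans (sum_le_sum fun l _ ↦ ?_)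
        rw [abs_mul, abs_sq]
        exact mul_le_mul_of_nonneg_right (hj l (mem_univ l)) (sq_nonneg _)
    _ = (∑ l, c l ^ 2) ^ R * hH.eigenvalues j ^ R := by
        rw [← mul_sum, mul_pow, hR.pow_abs, mul_comm]
    _ ≤ G ^ R * ∑ l, hH.eigenvalues l ^ R := by
        have := hR.pow_nonneg (hH.eigenvalues j)
        gcongr
        exact single_le_sum (f := fun l ↦ hH.eigenvalues l ^ R) (fun l _ ↦ hR.pow_nonneg _)
          (mem_univ j)

lemma trace_mul_pow_comm (X Y : Matrix V V ℝ) (R : ℕ) :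
    ((X * Y) ^ R).trace = ((Y * X) ^ R).trace := by
  cases R with
  | zero => simp
  | succ r =>
    rw [pow_succ, ← mul_assoc, mul_pow_mul, mul_assoc, Matrix.trace_mul_comm, mul_assoc,
      ← pow_succ]

lemma dotProduct_mulVec_pow_le_trace_diagonal_inv_mul {A : Matrix V V ℝ} (hA : A.IsSymm)
    {Γ : V → ℝ} (hΓ : ∀ v, 0 ≤ Γ v) (hAΓ : ∀ v w, Γ v = 0 → A v w = 0) {R : ℕ} (hR : Even R)
    (hR0 : R ≠ 0) {y : V → ℝ} {G : ℝ} (hy : ∑ v, Γ v * y v ^ 2 ≤ G) :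
    (y ⬝ᵥ A *ᵥ y) ^ R ≤ G ^ R * ((Matrix.diagonal Γ⁻¹ * A) ^ R).trace := by
  set g : V → ℝ := fun v ↦ √(Γ v)
  set B : Matrix V V ℝ := Matrix.diagonal g⁻¹ * A * Matrix.diagonal g⁻¹
  have hgg (v : V) : g v * g v = Γ v := Real.mul_self_sqrt (hΓ v)
  have hg {v : V} (hv : g v = 0) : Γ v = 0 := by rw [← hgg, hv, zero_mul]
  have hB : B.IsSymm := by
    rw [Matrix.IsSymm, Matrix.transpose_mul, Matrix.transpose_mul, Matrix.diagonal_transpose, hA.eq,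
      ← mul_assoc]
  have hform : y ⬝ᵥ A *ᵥ y = (g * y) ⬝ᵥ B *ᵥ (g * y) := by
    simp only [dotProduct, Matrix.mulVec, mul_sum, B, Matrix.mul_diagonal, Matrix.diagonal_mul,
      Pi.mul_apply, Pi.inv_apply]
    refine sum_congr rfl fun v _ ↦ sum_congr rfl fun w _ ↦ ?_
    by_cases hv : g v = 0
    · simp [hAΓ v w (hg hv)]
    by_cases hw : g w = 0
    · simp [← hA.apply v w, hAΓ w v (hg hw)]
    field_simp
  have hnorm : ∑ v, Γ v * y v ^ 2 = (g * y) ⬝ᵥ (g * y) :=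
    sum_congr rfl fun v _ ↦ by
      rw [← hgg, Pi.mul_apply]
      ring
  have htrace : ((Matrix.diagonal Γ⁻¹ * A) ^ R).trace = (B ^ R).trace := by
    rw [trace_mul_pow_comm _ (Matrix.diagonal g⁻¹), ← mul_assoc, Matrix.diagonal_mul_diagonal]
    simp only [Pi.inv_apply, ← mul_inv, hgg]
    rfl
  rw [hform, htrace]
  exact dotProduct_mulVec_pow_le_trace hB hR hR0 (hnorm ▸ hy)

end QuadraticForm

lemma expect_pow_le_pow_of_even {α : Type*} [Fintype α] [Nonempty α] (f : α → ℝ) {R : ℕ}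
    (hR : Even R) : (𝔼 a, f a) ^ R ≤ 𝔼 a, f a ^ R := by
  have hcard : (Fintype.card α : ℝ) ≠ 0 := Nat.cast_ne_zero.mpr Fintype.card_ne_zero
  simpa [Fintype.expect_eq_sum_div_card, div_eq_inv_mul, mul_sum] using
    Real.pow_arith_mean_le_arith_mean_pow_of_even univ (fun _ : α ↦ (Fintype.card α : ℝ)⁻¹) f
      (fun _ _ ↦ by positivity) (by simp [hcard]) hR

lemma dotProduct_mulVec_le_sum_abs {m n : Type*} [Fintype m] [Fintype n] (A : Matrix m n ℝ)
    {y : m → ℝ} {z : n → ℝ} (hy : ∀ v, |y v| ≤ 1) (hz : ∀ w, |z w| ≤ 1) :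
    |y ⬝ᵥ A *ᵥ z| ≤ ∑ v, ∑ w, |A v w| := by
  simp only [dotProduct, Matrix.mulVec, mul_sum]
  refine (abs_sum_le_sum_abs _ _).trans (sum_le_sum fun v _ ↦ ?_)
  refine (abs_sum_le_sum_abs _ _).trans (sum_le_sum fun w _ ↦ ?_)
  rw [abs_mul, abs_mul]
  exact (mul_le_of_le_one_left (by positivity) (hy v)).trans
    (mul_le_of_le_one_right (abs_nonneg _) (hz w))

section Khintchine

variable {ι V : Type*} [Fintype ι] [DecidableEq ι] [Fintype V]

lemma expect_trace_diagonal_inv_mul_signedSum_pow_le [DecidableEq V] {A : ι → Matrix V V ℝ}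
    {Γ : V → ℝ} {θ : ℝ} (hθ : 0 ≤ θ) (hcol : ∀ i v, ∑ w, |A i v w| ≤ θ * Γ v)
    (htot : ∀ v, ∑ i, ∑ w, |A i v w| ≤ Γ v) (R : ℕ) :
    𝔼 b, ((Matrix.diagonal Γ⁻¹ * signedSum A b) ^ R).trace ≤
      Fintype.card V * (2 * √(R * θ)) ^ R := by
  have hΓ (v : V) : 0 ≤ Γ v := le_trans (by positivity) (htot v)
  set P : ι → Matrix V V ℝ := fun i ↦ Matrix.diagonal Γ⁻¹ * A i
  have hP (b : ι → Bool) : Matrix.diagonal Γ⁻¹ * signedSum A b = signedSum P b := by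
    simp only [signedSum, P, mul_sum, mul_smul_comm]
  have hrow (i : ι) (v : V) : ∑ w, |P i v w| = (Γ v)⁻¹ * ∑ w, |A i v w| := by
    simp only [P, Matrix.diagonal_mul, abs_mul, mul_sum, Pi.inv_apply, abs_inv,
      abs_of_nonneg (hΓ v)]
  have hinv {v : V} {t u : ℝ} (ht : 0 ≤ t) (h : u ≤ t * Γ v) : (Γ v)⁻¹ * u ≤ t := by
    rw [inv_mul_eq_div]
    exact div_le_of_le_mul₀ (hΓ v) ht h
  simp only [hP]
  refine trace_expect_signedSum_pow_le R hθ (fun i v ↦ ?_) (fun v ↦ ?_)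
  · exact (hrow i v).trans_le (hinv hθ (hcol i v))
  · simp only [hrow, ← mul_sum]
    exact hinv zero_le_one (by simpa using htot v)

/-- A matrix Khintchine inequality. Averaging the `R`-th power over the signs reduces the quadratic
form to the trace of a power of `Γ⁻¹ ∑ bᵢ Aᵢ`; the dimension `|V|` only enters as its `R`-th
root. -/
theorem expect_dotProduct_signedSum_mulVec_le {A : ι → Matrix V V ℝ} (hA : ∀ i, (A i).IsSymm)
    {Γ : V → ℝ} {θ : ℝ} (hθ : 0 ≤ θ) (hcol : ∀ i v, ∑ w, |A i v w| ≤ θ * Γ v)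
    (htot : ∀ v, ∑ i, ∑ w, |A i v w| ≤ Γ v) {R : ℕ} (hR : Even R) (hR0 : R ≠ 0)
    (hV : (Fintype.card V : ℝ) ≤ 2 ^ R) (z : (ι → Bool) → V → ℝ) (hz : ∀ b v, |z b v| ≤ 1) :
    𝔼 b, z b ⬝ᵥ signedSum A b *ᵥ z b ≤ 4 * √(R * θ) * ∑ v, Γ v := by
  have hΓ (v : V) : 0 ≤ Γ v := le_trans (by positivity) (htot v)
  have hsum : 0 ≤ ∑ v, Γ v := sum_nonneg fun v _ ↦ hΓ v
  have hAΓ (b : ι → Bool) (v w : V) (hv : Γ v = 0) : signedSum A b v w = 0 := by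
    rw [signedSum_apply]
    refine sum_eq_zero fun i _ ↦ mul_eq_zero_of_right _ (abs_nonpos_iff.mp ?_)
    calc |A i v w| ≤ ∑ w, |A i v w| :=
          single_le_sum (f := fun w ↦ |A i v w|) (fun _ _ ↦ abs_nonneg _) (mem_univ w)
      _ ≤ 0 := (hcol i v).trans_eq (by rw [hv, mul_zero])
  have hnorm (b : ι → Bool) : ∑ v, Γ v * z b v ^ 2 ≤ ∑ v, Γ v :=
    sum_le_sum fun v _ ↦ mul_le_of_le_one_right (hΓ v) ((sq_le_one_iff_abs_le_one _).mpr (hz b v))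
  have hpow : (𝔼 b, z b ⬝ᵥ signedSum A b *ᵥ z b) ^ R ≤ (4 * √(R * θ) * ∑ v, Γ v) ^ R := by
    calc (𝔼 b, z b ⬝ᵥ signedSum A b *ᵥ z b) ^ R
        ≤ 𝔼 b, (z b ⬝ᵥ signedSum A b *ᵥ z b) ^ R := expect_pow_le_pow_of_even _ hR
      _ ≤ 𝔼 b, (∑ v, Γ v) ^ R * ((Matrix.diagonal Γ⁻¹ * signedSum A b) ^ R).trace := by
          gcongr with b
          exact dotProduct_mulVec_pow_le_trace_diagonal_inv_mul (isSymm_signedSum hA b) hΓ (hAΓ b)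
            hR hR0 (hnorm b)
      _ ≤ (∑ v, Γ v) ^ R * (2 ^ R * (2 * √(R * θ)) ^ R) := by
          rw [← mul_expect]
          gcongr
          exact (expect_trace_diagonal_inv_mul_signedSum_pow_le hθ hcol htot R).trans (by gcongr)
      _ = (4 * √(R * θ) * ∑ v, Γ v) ^ R := by
        rw [← mul_pow, ← mul_pow]
        ring
  have h0 : 0 ≤ 4 * √(R * θ) * ∑ v, Γ v := by positivity
  exact le_of_not_gt fun h ↦ hpow.not_gt (pow_lt_pow_left₀ h h0 hR0)

theorem expect_dotProduct_signedSum_mulVec_le_of_bipartite {U W : Type*} [Fintype U] [Fintype W]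
    {M : ι → Matrix U W ℝ} {ΓU : U → ℝ} {ΓW : W → ℝ} {θ : ℝ} (hθ : 0 ≤ θ)
    (hcolU : ∀ i u, ∑ w, |M i u w| ≤ θ * ΓU u) (hcolW : ∀ i w, ∑ u, |M i u w| ≤ θ * ΓW w)
    (htotU : ∀ u, ∑ i, ∑ w, |M i u w| ≤ ΓU u) (htotW : ∀ w, ∑ i, ∑ u, |M i u w| ≤ ΓW w)
    {R : ℕ} (hR : Even R) (hR0 : R ≠ 0) (hcard : (Fintype.card U + Fintype.card W : ℝ) ≤ 2 ^ R)
    (y : (ι → Bool) → U → ℝ) (hy : ∀ b u, |y b u| ≤ 1)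
    (z : (ι → Bool) → W → ℝ) (hz : ∀ b w, |z b w| ≤ 1) :
    𝔼 b, y b ⬝ᵥ signedSum M b *ᵥ z b ≤ 2 * √(R * θ) * (∑ u, ΓU u + ∑ w, ΓW w) := by
  set A : ι → Matrix (U ⊕ W) (U ⊕ W) ℝ := fun i ↦ Matrix.fromBlocks 0 (M i) (M i)ᵀ 0
  have hA (i : ι) : (A i).IsSymm := by
    simp [A, Matrix.IsSymm, Matrix.fromBlocks_transpose]
  have hform (b : ι → Bool) : Sum.elim (y b) (z b) ⬝ᵥ signedSum A b *ᵥ Sum.elim (y b) (z b) =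
      2 * (y b ⬝ᵥ signedSum M b *ᵥ z b) := by
    rw [dotProduct_signedSum_mulVec, dotProduct_signedSum_mulVec, mul_sum]
    refine sum_congr rfl fun i _ ↦ ?_
    have : z b ⬝ᵥ (M i)ᵀ *ᵥ y b = y b ⬝ᵥ M i *ᵥ z b := by
      rw [Matrix.mulVec_transpose, dotProduct_comm, ← Matrix.dotProduct_mulVec]
    simp only [A, Matrix.fromBlocks_mulVec, Sum.elim_comp_inl, Sum.elim_comp_inr,
      Matrix.zero_mulVec, zero_add, add_zero, sumElim_dotProduct_sumElim, this]
    ring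
  have h := expect_dotProduct_signedSum_mulVec_le hA (Γ := Sum.elim ΓU ΓW) hθ
    (by rintro i (u | w) <;> simpa [A] using by first | exact hcolU i u | exact hcolW i w)
    (by rintro (u | w) <;> simpa [A] using by first | exact htotU u | exact htotW w)
    hR hR0 (by simpa using hcard) (fun b ↦ Sum.elim (y b) (z b))
    (by rintro b (u | w) <;> simp [hy, hz])
  simp only [hform, ← mul_expect, Fintype.sum_sum_type, Sum.elim_inl, Sum.elim_inr] at h
  linarith

end Khintchine

/-- The submatrix of `A` on the rows and columns where `r ≤ τ`, extended by zero. -/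
def truncate {V : Type*} (r : V → ℝ) (τ : ℝ) (A : Matrix V V ℝ) : Matrix V V ℝ :=
  .of fun v w ↦ if r v ≤ τ ∧ r w ≤ τ then A v w else 0

section Truncate

variable {V : Type*} {M : Matrix V V ℝ} {τ : ℝ}

lemma abs_truncate_le (r : V → ℝ) (τ : ℝ) {A : Matrix V V ℝ} (hAM : ∀ v w, |A v w| ≤ M v w)
    (v w : V) : |truncate r τ A v w| ≤ M v w := by
  have := (abs_nonneg _).trans (hAM v w)
  simp only [truncate, Matrix.of_apply]
  split_ifs <;> simp [*]

variable [Fintype V]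

lemma sum_abs_truncate_le {A : Matrix V V ℝ} (hAM : ∀ v w, |A v w| ≤ M v w) (hτ : 0 ≤ τ) (v : V) :
    ∑ w, |truncate (fun v ↦ ∑ w, M v w) τ A v w| ≤ τ := by
  by_cases hv : ∑ w, M v w ≤ τ
  · exact (sum_le_sum fun w _ ↦ abs_truncate_le _ τ hAM v w).trans hv
  · simpa [truncate, hv] using hτ

lemma sum_abs_sub_truncate_le {A : Matrix V V ℝ} (hAM : ∀ v w, |A v w| ≤ M v w) (hM : M.IsSymm)
    (hτ : 0 < τ) :
    ∑ v, ∑ w, |(A - truncate (fun v ↦ ∑ w, M v w) τ A) v w| ≤ 2 / τ * ∑ v, (∑ w, M v w) ^ 2 := by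
  set r : V → ℝ := fun v ↦ ∑ w, M v w
  have hM0 (v w : V) : 0 ≤ M v w := (abs_nonneg _).trans (hAM v w)
  have hentry (v w : V) : |(A - truncate r τ A) v w| ≤ (r v + r w) / τ * M v w := by
    have hr0 (v : V) : 0 ≤ r v := sum_nonneg fun w _ ↦ hM0 v w
    simp only [truncate, Matrix.sub_apply, Matrix.of_apply]
    split_ifs with h
    · have := hr0 v
      have := hr0 w
      have := hM0 v w
      simp only [sub_self, abs_zero]
      positivity
    · have h1 : 1 ≤ (r v + r w) / τ := by
        rw [one_le_div hτ]
        by_contra! hlt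
        exact h ⟨by linarith [hr0 w], by linarith [hr0 v]⟩
      rw [sub_zero]
      exact (hAM v w).trans (le_mul_of_one_le_left (hM0 v w) h1)
  have hrr : ∑ v, ∑ w, r w * M v w = ∑ v, r v ^ 2 := by
    rw [sum_comm]
    refine sum_congr rfl fun w _ ↦ ?_
    rw [← mul_sum, sq, sum_congr rfl fun v _ ↦ hM.apply w v]
  calc ∑ v, ∑ w, |(A - truncate r τ A) v w| ≤ ∑ v, ∑ w, (r v + r w) / τ * M v w := by
        gcongr with v _ w _
        exact hentry v w
    _ = (∑ v, ∑ w, r v * M v w + ∑ v, ∑ w, r w * M v w) / τ := by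
        simp only [← sum_add_distrib, sum_div]
        exact sum_congr rfl fun v _ ↦ sum_congr rfl fun w _ ↦ by ring
    _ = 2 / τ * ∑ v, r v ^ 2 := by
        simp only [hrr, ← mul_sum, sq]
        ring

/-- Deleting the rows and columns of `Aᵢ` whose sum exceeds `τ` changes the form by at most the
second moment of the row sums; what is left satisfies the matrix Khintchine inequality. -/
theorem expect_dotProduct_signedSum_mulVec_le_of_truncate {ι : Type*} [Fintype ι] [DecidableEq ι]
    {A M : ι → Matrix V V ℝ} (hA : ∀ i, (A i).IsSymm) (hM : ∀ i, (M i).IsSymm)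
    (hAM : ∀ i v w, |A i v w| ≤ M i v w) (hτ : 0 < τ) {d : ℝ} (hd : 0 < d) {R : ℕ} (hR : Even R)
    (hR0 : R ≠ 0) (hV : (Fintype.card V : ℝ) ≤ 2 ^ R) (z : (ι → Bool) → V → ℝ)
    (hz : ∀ b v, |z b v| ≤ 1) :
    𝔼 b, z b ⬝ᵥ signedSum A b *ᵥ z b ≤
      4 * √(R * (τ / d)) * ∑ v, (∑ i, ∑ w, M i v w + d) +
        2 / τ * ∑ i, ∑ v, (∑ w, M i v w) ^ 2 := by
  set T : ι → Matrix V V ℝ := fun i ↦ truncate (fun v ↦ ∑ w, M i v w) τ (A i)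
  have hT (i : ι) : (T i).IsSymm := by
    ext v w
    simp only [T, truncate, Matrix.transpose_apply, Matrix.of_apply, (hA i).apply v w, and_comm]
  have hmain : 𝔼 b, z b ⬝ᵥ signedSum T b *ᵥ z b ≤
      4 * √(R * (τ / d)) * ∑ v, (∑ i, ∑ w, M i v w + d) := by
    have hM0 (i : ι) (v w : V) : 0 ≤ M i v w := (abs_nonneg _).trans (hAM i v w)
    refine expect_dotProduct_signedSum_mulVec_le hT (by positivity) (fun i v ↦ ?_) (fun v ↦ ?_)
      hR hR0 hV z hz
    · calc ∑ w, |T i v w| ≤ τ / d * d := by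
            rw [div_mul_cancel₀ τ hd.ne']
            exact sum_abs_truncate_le (hAM i) hτ.le v
        _ ≤ τ / d * (∑ i, ∑ w, M i v w + d) := by
            gcongr
            exact le_add_of_nonneg_left (sum_nonneg fun i _ ↦ sum_nonneg fun w _ ↦ hM0 i v w)
    · exact le_add_of_le_of_nonneg (sum_le_sum fun i _ ↦ sum_le_sum fun w _ ↦
        abs_truncate_le _ τ (hAM i) v w) hd.le
  have hrest (b : ι → Bool) : z b ⬝ᵥ signedSum A b *ᵥ z b ≤ z b ⬝ᵥ signedSum T b *ᵥ z b +
      2 / τ * ∑ i, ∑ v, (∑ w, M i v w) ^ 2 := by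
    rw [dotProduct_signedSum_mulVec, dotProduct_signedSum_mulVec, mul_sum, ← sum_add_distrib]
    refine sum_le_sum fun i _ ↦ ?_
    have hdiff : pmo (b i) * (z b ⬝ᵥ (A i - T i) *ᵥ z b) ≤ 2 / τ * ∑ v, (∑ w, M i v w) ^ 2 := by
      refine (le_abs_self _).trans ?_
      rw [abs_mul, abs_pmo, one_mul]
      exact (dotProduct_mulVec_le_sum_abs _ (hz b) (hz b)).trans
        (sum_abs_sub_truncate_le (hAM i) (hM i) hτ)
    rw [Matrix.sub_mulVec, dotProduct_sub, mul_sub] at hdiff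
    linarith
  calc 𝔼 b, z b ⬝ᵥ signedSum A b *ᵥ z b
      ≤ 𝔼 b, (z b ⬝ᵥ signedSum T b *ᵥ z b + 2 / τ * ∑ i, ∑ v, (∑ w, M i v w) ^ 2) :=
        expect_le_expect fun b _ ↦ hrest b
    _ ≤ _ := by
        rw [expect_add_distrib, Fintype.expect_const]
        gcongr

end Truncate

section Tensor

variable {ι V : Type*}

/-- A 3-tensor invariant under all permutations of its arguments, expressed on two generators. -/
structure IsSymmTensor (g : V → V → V → ℝ) : Prop where
  swap_fst_snd : ∀ u v w, g v u w = g u v w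
  swap_snd_trd : ∀ u v w, g u w v = g u v w

lemma IsSymmTensor.rotate {g : V → V → V → ℝ} (hg : IsSymmTensor g) (u v w : V) :
    g v w u = g u v w := by
  rw [hg.swap_snd_trd, hg.swap_fst_snd]

variable [Fintype ι] [Fintype V]

/-- The cubic form of a 3-tensor. -/
def cubicForm (g : V → V → V → ℝ) (x : V → ℝ) : ℝ :=
  ∑ u, ∑ v, ∑ w, g u v w * x u * x v * x w

/-- The average correlation of the bit `bᵢ` with the cubic form of `gᵢ` at the codeword `x b`,
summed over `i`. -/
def correlation [DecidableEq ι] (g : ι → V → V → V → ℝ) (x : (ι → Bool) → V → ℝ) : ℝ :=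
  𝔼 b, ∑ i, pmo (b i) * cubicForm (g i) (x b)

/-- The number of colours and triples of the family `h` that extend the ordered pair `(v, w)`,
counted with weights. -/
def codegree (h : ι → V → V → V → ℝ) (v w : V) : ℝ := ∑ i, ∑ u, h i u v w

/-- A fractional matching of ordered triples: nonnegative weights whose sum over the triples with a
given vertex in a given position is at most `1`. -/
structure IsFractionalMatching (g : V → V → V → ℝ) : Prop where
  nonneg : ∀ u v w, 0 ≤ g u v w
  sum_fst_le : ∀ u, ∑ v, ∑ w, g u v w ≤ 1
  sum_snd_le : ∀ v, ∑ u, ∑ w, g u v w ≤ 1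
  sum_trd_le : ∀ w, ∑ u, ∑ v, g u v w ≤ 1

lemma cubicForm_add (g h : V → V → V → ℝ) (x : V → ℝ) :
    cubicForm (g + h) x = cubicForm g x + cubicForm h x := by
  simp only [cubicForm, Pi.add_apply, add_mul, sum_add_distrib]

lemma cubicForm_rotate (g : V → V → V → ℝ) (x : V → ℝ) :
    cubicForm (fun u v w ↦ g w u v) x = cubicForm g x := by
  simp only [cubicForm]
  rw [(sum_congr rfl fun u _ ↦ sum_comm).trans sum_comm]
  exact sum_congr rfl fun w _ ↦ sum_congr rfl fun u _ ↦ sum_congr rfl fun v _ ↦ by ring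

lemma cubicForm_swap (g : V → V → V → ℝ) (x : V → ℝ) :
    cubicForm (fun u v w ↦ g v u w) x = cubicForm g x := by
  simp only [cubicForm]
  rw [sum_comm]
  exact sum_congr rfl fun v _ ↦ sum_congr rfl fun u _ ↦ sum_congr rfl fun w _ ↦ by ring

lemma cubicForm_eq_dotProduct_mulVec (g : V → V → V → ℝ) (x : V → ℝ) :
    cubicForm g x =
      x ⬝ᵥ Matrix.of (fun u (p : V × V) ↦ g u p.1 p.2) *ᵥ fun p ↦ x p.1 * x p.2 := by
  simp only [cubicForm, dotProduct, Matrix.mulVec, mul_sum, Fintype.sum_prod_type, Matrix.of_apply]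
  exact sum_congr rfl fun u _ ↦ sum_congr rfl fun v _ ↦ sum_congr rfl fun w _ ↦ by ring

lemma correlation_add [DecidableEq ι] (g h : ι → V → V → V → ℝ) (x : (ι → Bool) → V → ℝ) :
    correlation (g + h) x = correlation g x + correlation h x := by
  simp only [correlation, Pi.add_apply, cubicForm_add, mul_add, sum_add_distrib, expect_add_distrib]

namespace IsFractionalMatching

lemma of_isSymmTensor {g : V → V → V → ℝ} (hg : IsSymmTensor g) (nonneg : ∀ u v w, 0 ≤ g u v w)
    (hsum : ∀ u, ∑ v, ∑ w, g u v w ≤ 1) : IsFractionalMatching g where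
  nonneg := nonneg
  sum_fst_le := hsum
  sum_snd_le v := by simpa only [hg.swap_fst_snd v] using hsum v
  sum_trd_le w := by simpa only [hg.rotate w] using hsum w

lemma mono {f g : V → V → V → ℝ} (hg : IsFractionalMatching g) (hf : ∀ u v w, 0 ≤ f u v w)
    (hfg : ∀ u v w, f u v w ≤ g u v w) : IsFractionalMatching f where
  nonneg := hf
  sum_fst_le u := (sum_le_sum fun v _ ↦ sum_le_sum fun w _ ↦ hfg u v w).trans (hg.sum_fst_le u)
  sum_snd_le v := (sum_le_sum fun u _ ↦ sum_le_sum fun w _ ↦ hfg u v w).trans (hg.sum_snd_le v)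
  sum_trd_le w := (sum_le_sum fun u _ ↦ sum_le_sum fun v _ ↦ hfg u v w).trans (hg.sum_trd_le w)

variable {g : V → V → V → ℝ}

lemma sum_pair_le (hg : IsFractionalMatching g) (v w : V) : ∑ u, g u v w ≤ 1 := by
  refine le_trans (sum_le_sum fun u _ ↦ ?_) (hg.sum_snd_le v)
  exact single_le_sum (f := fun w ↦ g u v w) (fun w _ ↦ hg.nonneg u v w) (mem_univ w)

lemma sum_le (hg : IsFractionalMatching g) : ∑ u, ∑ v, ∑ w, g u v w ≤ Fintype.card V := by
  simpa using sum_le_card_nsmul univ _ 1 fun u _ ↦ hg.sum_fst_le u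

end IsFractionalMatching

variable {g h : ι → V → V → V → ℝ}

lemma codegree_nonneg (hh : ∀ i u v w, 0 ≤ h i u v w) (v w : V) : 0 ≤ codegree h v w :=
  sum_nonneg fun i _ ↦ sum_nonneg fun u _ ↦ hh i u v w

lemma sum_codegree_le (hh : ∀ i, IsFractionalMatching (h i)) :
    ∑ v, ∑ w, codegree h v w ≤ Fintype.card V * Fintype.card ι := by
  calc ∑ v, ∑ w, codegree h v w = ∑ v, ∑ i, ∑ u, ∑ w, h i u v w :=
        sum_congr rfl fun v _ ↦ sum_comm.trans (sum_congr rfl fun i _ ↦ sum_comm)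
    _ ≤ ∑ _v : V, ∑ _i : ι, 1 := sum_le_sum fun v _ ↦ sum_le_sum fun i _ ↦ (hh i).sum_snd_le v
    _ = Fintype.card V * Fintype.card ι := by simp

/-- If every pair `(v, w)` in the support of `g` has codegree more than `d`, then viewing `g i` as
a matrix with columns indexed by pairs, each column carries at most a `1 / d` fraction of the total
weight of its pair. -/
theorem correlation_le_of_heavy [DecidableEq ι] (hh : ∀ i, IsFractionalMatching (h i))
    (hg : ∀ i u v w, 0 ≤ g i u v w) (hgh : ∀ i u v w, g i u v w ≤ h i u v w) {d : ℝ} (hd : 0 < d)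
    (hdι : d ≤ Fintype.card ι) (hheavy : ∀ i u v w, codegree h v w ≤ d → g i u v w = 0) {R : ℕ}
    (hR : Even R) (hR0 : R ≠ 0) (hV : (Fintype.card V + Fintype.card V ^ 2 : ℝ) ≤ 2 ^ R)
    {x : (ι → Bool) → V → ℝ} (hx : ∀ b v, |x b v| ≤ 1) :
    correlation g x ≤ 4 * √(R / d) * (Fintype.card V * Fintype.card ι) := by
  have hgm (i : ι) : IsFractionalMatching (g i) := (hh i).mono (hg i) (hgh i)
  set M : ι → Matrix V (V × V) ℝ := fun i ↦ .of fun u p ↦ g i u p.1 p.2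
  have habs (i : ι) (u : V) (p : V × V) : |M i u p| = g i u p.1 p.2 := abs_of_nonneg (hg _ _ _ _)
  have hrow (i : ι) (u : V) : ∑ p, |M i u p| ≤ 1 := by
    simpa only [habs, Fintype.sum_prod_type] using (hgm i).sum_fst_le u
  have hcol (i : ι) (p : V × V) : ∑ u, |M i u p| ≤ 1 / d * codegree h p.1 p.2 := by
    simp only [habs]
    rw [one_div_mul_eq_div]
    rcases le_or_gt (codegree h p.1 p.2) d with hp | hp
    · rw [sum_eq_zero fun u _ ↦ hheavy i u p.1 p.2 hp]
      exact div_nonneg (codegree_nonneg (fun i ↦ (hh i).nonneg) _ _) hd.le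
    · exact ((hgm i).sum_pair_le _ _).trans ((one_le_div hd).mpr hp.le)
  calc correlation g x = 𝔼 b, x b ⬝ᵥ signedSum M b *ᵥ fun p ↦ x b p.1 * x b p.2 :=
        expect_congr rfl fun b _ ↦ by
          simp only [dotProduct_signedSum_mulVec, M, cubicForm_eq_dotProduct_mulVec]
    _ ≤ 2 * √(R * (1 / d)) *
        (∑ _u : V, (Fintype.card ι : ℝ) + ∑ p : V × V, codegree h p.1 p.2) := by
        refine expect_dotProduct_signedSum_mulVec_le_of_bipartite (by positivity)
          (fun i u ↦ ?_) hcol (fun u ↦ ?_) (fun p ↦ ?_) hR hR0 ?_ x hx _ fun b p ↦ ?_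
        · rw [one_div_mul_eq_div]
          exact (hrow i u).trans ((one_le_div hd).mpr hdι)
        · simpa using sum_le_card_nsmul univ _ 1 fun i _ ↦ hrow i u
        · simp only [habs]
          exact sum_le_sum fun i _ ↦ sum_le_sum fun u _ ↦ hgh i u p.1 p.2
        · simpa [sq] using hV
        · rw [abs_mul]
          exact mul_le_one₀ (hx _ _) (abs_nonneg _) (hx _ _)
    _ ≤ 2 * √(R * (1 / d)) * (2 * (Fintype.card V * Fintype.card ι)) := by
        gcongr
        simp only [sum_const, card_univ, nsmul_eq_mul, Fintype.sum_prod_type]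
        linarith [sum_codegree_le hh]
    _ = 4 * √(R / d) * (Fintype.card V * Fintype.card ι) := by
        rw [mul_one_div]
        ring

end Tensor

section Kikuchi

variable {L V : Type*} [Fintype L]

/-- Pairs of `L`-tuples of vertices, the index set of the Kikuchi matrix. -/
abbrev TuplePair (L V : Type*) := (L → V) × (L → V)

variable (L) in
/-- The Kikuchi matrix of the kernel `K` on pairs of tuples: `K` moves one coordinate `v` of the
first tuple to `v'` and one coordinate `w` of the second tuple to `w'`. -/
def kikuchi (K : V → V → V → V → ℝ) : Matrix (TuplePair L V) (TuplePair L V) ℝ :=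
  .of fun X Y ↦ ∑ p : L × L, if Set.EqOn X.1 Y.1 {p.1}ᶜ ∧ Set.EqOn X.2 Y.2 {p.2}ᶜ then
    K (X.1 p.1) (Y.1 p.1) (X.2 p.2) (Y.2 p.2) else 0

/-- The sum of `c` over all pairs formed by a coordinate of each tuple. -/
def pairSum (c : V → V → ℝ) (X : TuplePair L V) : ℝ := ∑ p : L × L, c (X.1 p.1) (X.2 p.2)

/-- The product of the signs `x` over both tuples. -/
def tupleSign (x : V → ℝ) (X : TuplePair L V) : ℝ := (∏ j, x (X.1 j)) * ∏ j, x (X.2 j)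

variable {K M : V → V → V → V → ℝ}

lemma isSymm_kikuchi (hK : ∀ v v' w w', K v v' w w' = K v' v w' w) : (kikuchi L K).IsSymm := by
  ext X Y
  simp only [kikuchi, Matrix.transpose_apply, Matrix.of_apply]
  refine sum_congr rfl fun p _ ↦ ?_
  rw [hK, Set.eqOn_comm (f₁ := Y.1), Set.eqOn_comm (f₁ := Y.2)]

lemma abs_kikuchi_le (hKM : ∀ v v' w w', |K v v' w w'| ≤ M v v' w w') (X Y : TuplePair L V) :
    |kikuchi L K X Y| ≤ kikuchi L M X Y := by
  refine (abs_sum_le_sum_abs _ _).trans (sum_le_sum fun p _ ↦ ?_)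
  split_ifs
  · exact hKM _ _ _ _
  · exact abs_zero.le

lemma prod_mul_prod_update {x : V → ℝ} (hx : ∀ v, |x v| = 1) (S : L → V) (a : L) (y : V) :
    (∏ j, x (S j)) * ∏ j, x (Function.update S a y j) = x (S a) * x y := by
  rw [← prod_mul_distrib, Fintype.prod_eq_single a fun j hj ↦ ?_, Function.update_self]
  rw [Function.update_of_ne hj, ← abs_mul_abs_self, hx, one_mul]

lemma abs_tupleSign {x : V → ℝ} (hx : ∀ v, |x v| = 1) (X : TuplePair L V) :
    |tupleSign x X| = 1 := by
  simp [tupleSign, abs_mul, abs_prod, hx]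

variable [Fintype V]

lemma sum_ite_eqOn_compl_singleton (S : L → V) (a : L) (F : (L → V) → ℝ) :
    ∑ T, (if Set.EqOn S T {a}ᶜ then F T else 0) = ∑ y, F (Function.update S a y) := by
  rw [← sum_filter]
  symm
  refine sum_bij' (fun y _ ↦ Function.update S a y) (fun T _ ↦ T a) ?_ ?_ ?_ ?_ ?_
  · exact fun y _ ↦ mem_filter.2 ⟨mem_univ _, fun j hj ↦ (Function.update_of_ne hj _ _).symm⟩
  · simp
  · simp
  · intro T hT
    exact Function.update_eq_iff.2 ⟨rfl, fun j hj ↦ (mem_filter.1 hT).2 hj⟩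
  · simp

lemma expect_update (a : L) (F : (L → V) → ℝ) :
    𝔼 S, 𝔼 y, F (Function.update S a y) = 𝔼 S, F S := by
  rcases isEmpty_or_nonempty V with hV | hV
  · have : IsEmpty (L → V) := ⟨fun S ↦ hV.elim (S a)⟩
    simp
  calc 𝔼 S, 𝔼 y, F (Function.update S a y) = 𝔼 p : (L → V) × V, F (Function.update p.1 a p.2) :=
        (expect_product' univ univ _).symm
    _ = 𝔼 p : (L → V) × V, F p.1 := by
        let swap : (L → V) × V → (L → V) × V := fun p ↦ (Function.update p.1 a p.2, p.1 a)
        have hswap : Function.Involutive swap := fun p ↦ by simp [swap]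
        exact Fintype.expect_equiv hswap.toPerm _ _ fun p ↦ rfl
    _ = 𝔼 S, F S := by
        rw [← univ_product_univ, expect_product' univ univ fun S _ ↦ F S]
        simp only [Fintype.expect_const]

lemma expect_apply [Nonempty V] (a : L) (f : V → ℝ) : 𝔼 S : L → V, f (S a) = 𝔼 v, f v := by
  rw [← expect_update a]
  simp only [Function.update_self, Fintype.expect_const]

/-- The total weight of the moves of the kernel `K` starting from the vertices `v` and `w`. -/
def localDegree (K : V → V → V → V → ℝ) (v w : V) : ℝ := ∑ v', ∑ w', K v v' w w'

/-- The quartic form of the kernel `K`. -/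
def quarticForm (K : V → V → V → V → ℝ) (x : V → ℝ) : ℝ :=
  ∑ v, ∑ w, ∑ v', ∑ w', K v v' w w' * (x v * x v' * (x w * x w'))

/-- The number of occurrences of each pair of vertices as a pair of coordinates of `X`, summed over
all pairs of tuples `X`. -/
def kikuchiWeight (L V : Type*) [Fintype L] [Fintype V] : ℝ :=
  Fintype.card (TuplePair L V) * Fintype.card L ^ 2 / Fintype.card V ^ 2

lemma sum_kikuchi_mul (K : V → V → V → V → ℝ) (X : TuplePair L V) (F : TuplePair L V → ℝ) :
    ∑ Y, kikuchi L K X Y * F Y = ∑ p : L × L, ∑ v', ∑ w', K (X.1 p.1) v' (X.2 p.2) w' *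
      F (Function.update X.1 p.1 v', Function.update X.2 p.2 w') := by
  simp only [kikuchi, Matrix.of_apply, sum_mul, ite_mul, zero_mul, ite_and]
  rw [sum_comm]
  refine sum_congr rfl fun p _ ↦ ?_
  rw [Fintype.sum_prod_type, sum_comm]
  simp only [sum_ite_eqOn_compl_singleton]
  rw [sum_comm]
  simp only [sum_ite_eqOn_compl_singleton, Function.update_self]

lemma sum_kikuchi (K : V → V → V → V → ℝ) (X : TuplePair L V) :
    ∑ Y, kikuchi L K X Y = pairSum (localDegree K) X := by
  simpa only [mul_one, pairSum, localDegree] using sum_kikuchi_mul K X fun _ ↦ 1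

lemma expect_apply_apply [Nonempty V] (c : V → V → ℝ) (p : L × L) :
    𝔼 X : TuplePair L V, c (X.1 p.1) (X.2 p.2) = 𝔼 v, 𝔼 w, c v w := by
  rw [← univ_product_univ, expect_product' univ univ fun S T : L → V ↦ c (S p.1) (T p.2)]
  simp only [expect_apply p.2 (c _)]
  exact expect_apply p.1 fun v ↦ 𝔼 w, c v w

lemma sum_pairSum [Nonempty V] (c : V → V → ℝ) :
    ∑ X : TuplePair L V, pairSum c X = kikuchiWeight L V * ∑ v, ∑ w, c v w := by
  have hpair (p : L × L) : ∑ X : TuplePair L V, c (X.1 p.1) (X.2 p.2) =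
      Fintype.card (TuplePair L V) * ((∑ v, ∑ w, c v w) / Fintype.card V ^ 2) := by
    rw [← Fintype.card_mul_expect, expect_apply_apply]
    simp only [Fintype.expect_eq_sum_div_card, ← sum_div]
    ring
  simp only [pairSum]
  rw [sum_comm]
  simp only [hpair, sum_const, card_univ, Fintype.card_prod, nsmul_eq_mul, kikuchiWeight]
  push_cast
  ring

lemma tupleSign_dotProduct_kikuchi_mulVec [Nonempty V] (K : V → V → V → V → ℝ) {x : V → ℝ}
    (hx : ∀ v, |x v| = 1) :
    tupleSign x ⬝ᵥ kikuchi L K *ᵥ tupleSign x = kikuchiWeight L V * quarticForm K x := by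
  rw [quarticForm, ← sum_pairSum]
  refine sum_congr rfl fun X _ ↦ ?_
  rw [Matrix.mulVec, dotProduct, sum_kikuchi_mul, mul_sum]
  refine sum_congr rfl fun p _ ↦ ?_
  simp only [mul_sum]
  refine sum_congr rfl fun v' _ ↦ sum_congr rfl fun w' _ ↦ ?_
  rw [mul_left_comm, tupleSign, tupleSign, mul_mul_mul_comm, prod_mul_prod_update hx,
    prod_mul_prod_update hx]

variable {c : V → V → ℝ} {ρ : ℝ}

/-- Two distinct pairs of coordinates differ in one of the tuples, and averaging over that
coordinate of the second pair costs a factor `ρ`. -/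
lemma expect_mul_apply_le (hc : ∀ v w, 0 ≤ c v w) (hfst : ∀ w, 𝔼 v, c v w ≤ ρ)
    (hsnd : ∀ v, 𝔼 w, c v w ≤ ρ) {p q : L × L} (hpq : p ≠ q) :
    𝔼 X : TuplePair L V, c (X.1 p.1) (X.2 p.2) * c (X.1 q.1) (X.2 q.2) ≤
      ρ * 𝔼 X : TuplePair L V, c (X.1 p.1) (X.2 p.2) := by
  rw [← univ_product_univ, expect_product' univ univ fun S T : L → V ↦ c (S p.1) (T p.2),
    expect_product' univ univ fun S T : L → V ↦ c (S p.1) (T p.2) * c (S q.1) (T q.2)]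
  by_cases hfst_eq : p.1 = q.1
  · have hne : p.2 ≠ q.2 := fun hsnd_eq ↦ hpq (Prod.ext hfst_eq hsnd_eq)
    rw [mul_expect]
    refine expect_le_expect fun S _ ↦ ?_
    rw [← expect_update q.2, mul_expect]
    refine expect_le_expect fun T _ ↦ ?_
    simp only [Function.update_of_ne hne, Function.update_self]
    rw [← mul_expect, mul_comm]
    exact mul_le_mul_of_nonneg_right (hsnd _) (hc _ _)
  · rw [expect_comm, expect_comm univ univ fun S T : L → V ↦ c (S p.1) (T p.2), mul_expect]
    refine expect_le_expect fun T _ ↦ ?_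
    rw [← expect_update q.1, mul_expect]
    refine expect_le_expect fun S _ ↦ ?_
    simp only [Function.update_of_ne hfst_eq, Function.update_self]
    rw [← mul_expect, mul_comm]
    exact mul_le_mul_of_nonneg_right (hfst _) (hc _ _)

lemma expect_sq_pairSum_le {d : ℝ} (hc : ∀ v w, 0 ≤ c v w) (hd : ∀ v w, c v w ≤ d)
    (hfst : ∀ w, 𝔼 v, c v w ≤ ρ) (hsnd : ∀ v, 𝔼 w, c v w ≤ ρ) :
    𝔼 X : TuplePair L V, pairSum c X ^ 2 ≤
      (d + (Fintype.card L ^ 2 - 1) * ρ) * 𝔼 X : TuplePair L V, pairSum c X := by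
  have hpair (p q : L × L) : 𝔼 X : TuplePair L V, c (X.1 p.1) (X.2 p.2) * c (X.1 q.1) (X.2 q.2) ≤
      (if p = q then d else ρ) * 𝔼 X : TuplePair L V, c (X.1 p.1) (X.2 p.2) := by
    split_ifs with hpq
    · rw [← hpq, mul_expect]
      exact expect_le_expect fun X _ ↦ mul_le_mul_of_nonneg_right (hd _ _) (hc _ _)
    · exact expect_mul_apply_le hc hfst hsnd hpq
  have hcount (p : L × L) :
      ∑ q, (if p = q then d else ρ) = d + (Fintype.card L ^ 2 - 1) * ρ := by
    rw [Fintype.sum_eq_add_sum_compl p, if_pos rfl,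
      sum_congr rfl fun q hq ↦ if_neg fun hpq ↦ by simp [hpq] at hq, sum_const, card_compl,
      card_singleton, nsmul_eq_mul, Nat.cast_sub (Fintype.card_pos_iff.2 ⟨p⟩), Fintype.card_prod]
    push_cast
    ring
  calc 𝔼 X : TuplePair L V, pairSum c X ^ 2
      = ∑ p, ∑ q, 𝔼 X : TuplePair L V, c (X.1 p.1) (X.2 p.2) * c (X.1 q.1) (X.2 q.2) := by
        simp only [pairSum, pow_two, sum_mul_sum, expect_sum_comm]
    _ ≤ ∑ p, ∑ q, (if p = q then d else ρ) * 𝔼 X : TuplePair L V, c (X.1 p.1) (X.2 p.2) :=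
        sum_le_sum fun p _ ↦ sum_le_sum fun q _ ↦ hpair p q
    _ = (d + (Fintype.card L ^ 2 - 1) * ρ) * 𝔼 X : TuplePair L V, pairSum c X := by
        simp only [← sum_mul, hcount, ← mul_sum, pairSum, expect_sum_comm]

end Kikuchi

section QuarticForm

variable {ι L V : Type*} [Fintype L] [Fintype V] [Nonempty V]

lemma sum_sq_pairSum_le {c : V → V → ℝ} {d κ : ℝ} (hc : ∀ v w, 0 ≤ c v w)
    (hd : ∀ v w, c v w ≤ d) (hfst : ∀ w, ∑ v, c v w ≤ κ) (hsnd : ∀ v, ∑ w, c v w ≤ κ)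
    (hL : (Fintype.card L ^ 2 - 1) * (κ / Fintype.card V) ≤ d) :
    ∑ X : TuplePair L V, pairSum c X ^ 2 ≤ 2 * d * ∑ X : TuplePair L V, pairSum c X := by
  have hbound := expect_sq_pairSum_le (L := L) (ρ := κ / Fintype.card V) hc hd
    (fun w ↦ by rw [Fintype.expect_eq_sum_div_card]; gcongr; exact hfst w)
    (fun v ↦ by rw [Fintype.expect_eq_sum_div_card]; gcongr; exact hsnd v)
  have hnonneg : 0 ≤ ∑ X : TuplePair L V, pairSum c X :=
    sum_nonneg fun X _ ↦ sum_nonneg fun p _ ↦ hc _ _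
  simp only [Fintype.expect_eq_sum_div_card (ι := TuplePair L V),
    ← mul_div_assoc _ (∑ _X, _)] at hbound
  refine ((div_le_div_iff_of_pos_right (by positivity)).1 hbound).trans ?_
  gcongr
  linarith

variable [Nonempty L]

lemma kikuchiWeight_pos : 0 < kikuchiWeight L V := by
  rw [kikuchiWeight]
  positivity

/-- The quartic form of `K i` at `x` is a quadratic form of its Kikuchi matrix at `tupleSign x`.
The second moment of the row sums of that matrix controls the loss of truncating them at `τ`, and
adding `ℓ² κ² / |V|` to the total row sums at most doubles them on average. -/
theorem expect_quarticForm_le [Fintype ι] [DecidableEq ι] {K M : ι → V → V → V → V → ℝ}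
    (hKM : ∀ i v v' w w', |K i v v' w w'| ≤ M i v v' w w')
    (hK : ∀ i v v' w w', K i v v' w w' = K i v' v w' w)
    (hM : ∀ i v v' w w', M i v v' w w' = M i v' v w' w) {d κ τ : ℝ} (hκ : 0 < κ) (hτ : 0 < τ)
    (hd : ∀ i v w, localDegree (M i) v w ≤ d) (hfst : ∀ i w, ∑ v, localDegree (M i) v w ≤ κ)
    (hsnd : ∀ i v, ∑ w, localDegree (M i) v w ≤ κ)
    (htot : ∑ i, ∑ v, ∑ w, localDegree (M i) v w ≤ Fintype.card V * κ ^ 2)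
    (hL : (Fintype.card L ^ 2 - 1) * (κ / Fintype.card V) ≤ d) {R : ℕ} (hR : Even R) (hR0 : R ≠ 0)
    (hcard : ((Fintype.card V : ℝ) ^ Fintype.card L) ^ 2 ≤ 2 ^ R) {x : (ι → Bool) → V → ℝ}
    (hx : ∀ b v, |x b v| = 1) :
    𝔼 b, ∑ i, pmo (b i) * quarticForm (K i) (x b) ≤
      (8 * √(R * (τ * Fintype.card V / (Fintype.card L ^ 2 * κ ^ 2))) + 4 * d / τ) *
        (Fintype.card V * κ ^ 2) := by
  set n := (Fintype.card V : ℝ) with hn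
  set ℓ := (Fintype.card L : ℝ) with hℓ
  set W := kikuchiWeight L V with hWdef
  have hW : 0 < W := kikuchiWeight_pos
  have hdeg (i v w) : 0 ≤ localDegree (M i) v w :=
    sum_nonneg fun _ _ ↦ sum_nonneg fun _ _ ↦ (abs_nonneg _).trans (hKM _ _ _ _ _)
  have hd0 : 0 ≤ d := by
    refine le_trans (mul_nonneg (sub_nonneg.2 (one_le_pow₀ ?_)) (by positivity)) hL
    exact Nat.one_le_cast.2 Fintype.card_pos
  have hsum : ∑ i, ∑ X : TuplePair L V, pairSum (localDegree (M i)) X ≤ W * (n * κ ^ 2) := by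
    simp only [sum_pairSum, ← mul_sum]
    gcongr
  set d₀ := ℓ ^ 2 * κ ^ 2 / n with hd₀
  have hlevel : ∑ _X : TuplePair L V, d₀ = W * (n * κ ^ 2) := by
    rw [sum_const, card_univ, nsmul_eq_mul, hWdef, kikuchiWeight, hd₀, hn, hℓ]
    field_simp
  have hkikuchi := expect_dotProduct_signedSum_mulVec_le_of_truncate
    (A := fun i ↦ kikuchi L (K i)) (fun i ↦ isSymm_kikuchi (hK i)) (fun i ↦ isSymm_kikuchi (hM i))
    (fun i ↦ abs_kikuchi_le (hKM i)) hτ (d := d₀) (by positivity) hR hR0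
    (by simpa [← pow_two] using hcard) (fun b ↦ tupleSign (x b))
    fun b X ↦ (abs_tupleSign (hx b) X).le
  simp only [dotProduct_signedSum_mulVec, tupleSign_dotProduct_kikuchi_mulVec _ (hx _),
    sum_kikuchi, sum_add_distrib, hlevel, ← hWdef, mul_left_comm _ W, ← mul_sum,
    ← mul_expect] at hkikuchi
  refine le_of_mul_le_mul_left (hkikuchi.trans ?_) hW
  calc 4 * √(R * (τ / d₀)) * (∑ X : TuplePair L V, ∑ i, pairSum (localDegree (M i)) X +
          W * (n * κ ^ 2)) +
        2 / τ * ∑ i, ∑ X : TuplePair L V, pairSum (localDegree (M i)) X ^ 2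
      ≤ 4 * √(R * (τ / d₀)) * (W * (n * κ ^ 2) + W * (n * κ ^ 2)) +
        2 / τ * (2 * d * (W * (n * κ ^ 2))) := by
        gcongr
        · rw [sum_comm]
          exact hsum
        · refine le_trans (sum_le_sum fun i _ ↦
            sum_sq_pairSum_le (hdeg i) (hd i) (hfst i) (hsnd i) hL) ?_
          rw [← mul_sum]
          gcongr
    _ = W * ((8 * √(R * (τ * n / (ℓ ^ 2 * κ ^ 2))) + 4 * d / τ) * (n * κ ^ 2)) := by
        rw [hd₀, div_div_eq_mul_div]
        ring

end QuarticForm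

section Light

variable {ι V : Type*} [Fintype ι]

lemma sum_sum_sum_le_card [Fintype V] {f : ι → V → V → ℝ} (hf : ∀ i, ∑ v, ∑ w, f i v w ≤ 1) :
    ∑ v, ∑ w, ∑ i, f i v w ≤ Fintype.card ι := by
  rw [(sum_congr rfl fun v _ ↦ sum_comm).trans sum_comm]
  exact (sum_le_sum fun i _ ↦ hf i).trans_eq (by simp)

variable [DecidableEq ι]

lemma expect_piecewise {α : Type*} [Fintype α] [Nonempty α] (s : Finset ι) (F : (ι → α) → ℝ) :
    𝔼 b', 𝔼 b, F (s.piecewise b b') = 𝔼 b, F b := by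
  calc 𝔼 b', 𝔼 b, F (s.piecewise b b') = 𝔼 p : (ι → α) × (ι → α), F (s.piecewise p.2 p.1) :=
        (expect_product' univ univ _).symm
    _ = 𝔼 p : (ι → α) × (ι → α), F p.2 := by
        let swap : (ι → α) × (ι → α) → (ι → α) × (ι → α) :=
          fun p ↦ (s.piecewise p.1 p.2, s.piecewise p.2 p.1)
        have hswap : Function.Involutive swap := fun p ↦ by
          ext i <;> by_cases hi : i ∈ s <;> simp [swap, hi]
        exact Fintype.expect_equiv hswap.toPerm _ _ fun p ↦ rfl
    _ = 𝔼 b, F b := by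
        rw [← univ_product_univ, expect_product' univ univ fun _ b ↦ F b]
        exact Fintype.expect_const _

lemma expect_sq_sum_pmo_mul (y : ι → ℝ) :
    𝔼 c : ι → Bool, (∑ i, pmo (c i) * y i) ^ 2 = ∑ i, y i ^ 2 := by
  have hpair (i j : ι) : 𝔼 c : ι → Bool, pmo (c i) * y i * (pmo (c j) * y j) =
      if i = j then y i * y j else 0 := by
    rw [expect_congr rfl fun c _ ↦ mul_mul_mul_comm _ _ _ _, ← expect_mul, expect_pmo_mul_pmo,
      ite_mul, one_mul, zero_mul]
  simp only [sq, sum_mul_sum, expect_sum_comm, hpair, sum_ite_eq, mem_univ, if_true]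

/-- For the random set `s` and signs `pmo (c i)`, the two sums are `(∑ y ± ∑ pmo (c i) * y) / 2`. -/
lemma expect_sum_mul_sum_compl (y : ι → ℝ) :
    𝔼 c : ι → Bool, (∑ i with c i, y i) * ∑ j with ¬c j, y j =
      ((∑ i, y i) ^ 2 - ∑ i, y i ^ 2) / 4 := by
  have hprod (c : ι → Bool) : (∑ i with c i, y i) * ∑ j with ¬c j, y j =
      ((∑ i, y i) ^ 2 - (∑ i, pmo (c i) * y i) ^ 2) / 4 := by
    have hsign : ∑ i, pmo (c i) * y i = ∑ i with c i, y i - ∑ j with ¬c j, y j := by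
      simp only [sum_filter, ← sum_sub_distrib]
      exact sum_congr rfl fun i _ ↦ by cases c i <;> simp [pmo]
    rw [← sum_filter_add_sum_filter_not univ fun i ↦ (c i : Prop), hsign]
    ring
  simp only [hprod, ← expect_div, expect_sub_distrib, expect_sq_sum_pmo_mul, Fintype.expect_const]

variable [Fintype V]

/-- The quadratic form of the slice of the 3-tensor `g` at `u`. -/
def sliceForm (g : V → V → V → ℝ) (x : V → ℝ) (u : V) : ℝ := ∑ v, ∑ w, g u v w * (x v * x w)

/-- The kernel obtained by pairing two 3-tensors through a common first vertex. -/
def pairKernel (p q : V → V → V → ℝ) (v v' w w' : V) : ℝ := ∑ u, p u v v' * q u w w'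

lemma cubicForm_eq_sum_sliceForm (g : V → V → V → ℝ) (x : V → ℝ) :
    cubicForm g x = ∑ u, x u * sliceForm g x u := by
  simp only [cubicForm, sliceForm, mul_sum]
  exact sum_congr rfl fun u _ ↦ sum_congr rfl fun v _ ↦ sum_congr rfl fun w _ ↦ by ring

lemma sliceForm_sum_smul {J : Type*} (s : Finset J) (a : J → ℝ) (g : J → V → V → V → ℝ) (x : V → ℝ)
    (u : V) : sliceForm (∑ j ∈ s, a j • g j) x u = ∑ j ∈ s, a j * sliceForm (g j) x u := by
  simp only [sliceForm, Finset.sum_apply, Pi.smul_apply, smul_eq_mul, sum_mul, mul_sum, mul_assoc]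
  exact (sum_congr rfl fun v _ ↦ sum_comm).trans sum_comm

lemma abs_sliceForm_le {g : V → V → V → ℝ} (hg : ∀ u v w, 0 ≤ g u v w) {x : V → ℝ}
    (hx : ∀ v, |x v| = 1) (u : V) : |sliceForm g x u| ≤ ∑ v, ∑ w, g u v w := by
  refine (abs_sum_le_sum_abs _ _).trans (sum_le_sum fun v _ ↦ ?_)
  refine (abs_sum_le_sum_abs _ _).trans_eq (sum_congr rfl fun w _ ↦ ?_)
  rw [abs_mul, abs_mul, hx, hx, abs_of_nonneg (hg _ _ _), mul_one, mul_one]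

lemma sum_sum_sum_mul {α β γ : Type*} [Fintype α] [Fintype β] [Fintype γ] (f : α → β → ℝ)
    (h : α → γ → ℝ) : ∑ v, ∑ w, ∑ u, f u v * h u w = ∑ u, (∑ v, f u v) * ∑ w, h u w := by
  simp only [sum_mul_sum]
  exact (sum_congr rfl fun v _ ↦ sum_comm).trans sum_comm

lemma quarticForm_pairKernel (p q : V → V → V → ℝ) (x : V → ℝ) :
    quarticForm (pairKernel p q) x = ∑ u, sliceForm p x u * sliceForm q x u := by
  have hpairs := sum_sum_sum_mul (fun u (a : V × V) ↦ p u a.1 a.2 * (x a.1 * x a.2))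
    (fun u (a : V × V) ↦ q u a.1 a.2 * (x a.1 * x a.2))
  simp only [Fintype.sum_prod_type] at hpairs
  rw [quarticForm]
  refine Eq.trans (sum_congr rfl fun v _ ↦ ?_) hpairs
  rw [sum_comm]
  simp only [pairKernel, sum_mul, mul_mul_mul_comm]

lemma sum_sliceForm_mul_sum_compl_piecewise (s : Finset ι) (g : ι → V → V → V → ℝ)
    (b b' : ι → Bool) (y : V → ℝ) :
    ∑ u, (∑ i ∈ s, pmo (s.piecewise b b' i) * sliceForm (g i) y u) *
        ∑ j ∈ sᶜ, pmo (s.piecewise b b' j) * sliceForm (g j) y u =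
      ∑ i, pmo (b i) * ∑ u, sliceForm (if i ∈ s then g i else 0) y u *
        sliceForm (∑ j ∈ sᶜ, pmo (b' j) • g j) y u := by
  have hzero (u : V) : sliceForm 0 y u = 0 := by simp [sliceForm]
  simp only [mul_sum (univ : Finset V), ← mul_assoc]
  rw [sum_comm]
  refine sum_congr rfl fun u _ ↦ ?_
  rw [← sum_mul, sliceForm_sum_smul]
  simp only [apply_ite (sliceForm · y u), hzero, mul_ite, mul_zero, sum_ite_mem, univ_inter]
  congr 1
  · exact sum_congr rfl fun i hi ↦ by rw [piecewise_eq_of_mem _ _ _ hi]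
  · exact sum_congr rfl fun j hj ↦ by rw [piecewise_eq_of_notMem _ _ _ (mem_compl.1 hj)]

variable {p q : V → V → V → ℝ} {d κ : ℝ}

lemma localDegree_pairKernel (p q : V → V → V → ℝ) (v w : V) :
    localDegree (pairKernel p q) v w = ∑ u, (∑ v', p u v v') * ∑ w', q u w w' :=
  sum_sum_sum_mul (fun u v' ↦ p u v v') fun u w' ↦ q u w w'

lemma localDegree_pairKernel_le (hp : IsFractionalMatching p) (hd : 0 ≤ d)
    (hq : ∀ u w, ∑ w', q u w w' ≤ d) (v w : V) : localDegree (pairKernel p q) v w ≤ d := by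
  rw [localDegree_pairKernel]
  calc ∑ u, (∑ v', p u v v') * ∑ w', q u w w' ≤ ∑ u, (∑ v', p u v v') * d := by
        gcongr with u
        · exact sum_nonneg fun v' _ ↦ hp.nonneg u v v'
        · exact hq u w
    _ ≤ d := by
        rw [← sum_mul]
        exact mul_le_of_le_one_left hd (hp.sum_snd_le v)

lemma sum_fst_localDegree_pairKernel_le (hp : IsFractionalMatching p) (hq0 : ∀ u w w', 0 ≤ q u w w')
    (hq : ∀ w, ∑ u, ∑ w', q u w w' ≤ κ) (w : V) :
    ∑ v, localDegree (pairKernel p q) v w ≤ κ := by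
  simp only [localDegree_pairKernel]
  rw [sum_comm]
  refine le_trans (sum_le_sum fun u _ ↦ ?_) (hq w)
  rw [← sum_mul]
  exact mul_le_of_le_one_left (sum_nonneg fun w' _ ↦ hq0 u w w') (hp.sum_fst_le u)

lemma sum_snd_localDegree_pairKernel_le (hp : IsFractionalMatching p) (hκ : 0 ≤ κ)
    (hq : ∀ u, ∑ w, ∑ w', q u w w' ≤ κ) (v : V) :
    ∑ w, localDegree (pairKernel p q) v w ≤ κ := by
  simp only [localDegree_pairKernel]
  rw [sum_comm]
  calc ∑ u, ∑ w, (∑ v', p u v v') * ∑ w', q u w w' ≤ ∑ u, (∑ v', p u v v') * κ := by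
        gcongr with u
        rw [← mul_sum]
        gcongr
        · exact sum_nonneg fun v' _ ↦ hp.nonneg u v v'
        · exact hq u
    _ ≤ κ := by
        rw [← sum_mul]
        exact mul_le_of_le_one_left hκ (hp.sum_snd_le v)

variable {L : Type*} [Fintype L] [Nonempty L] [Nonempty V] {g : ι → V → V → V → ℝ} {τ : ℝ} {R : ℕ}
  {x : (ι → Bool) → V → ℝ}

lemma expect_sliceForm_mul_sliceForm_le {G H : V → V → V → ℝ}
    (hg : ∀ i, IsFractionalMatching (g i)) (hgsymm : ∀ i u v w, g i u w v = g i u v w)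
    (hHG : ∀ u v w, |H u v w| ≤ G u v w) (hHsymm : ∀ u v w, H u w v = H u v w)
    (hGsymm : ∀ u v w, G u w v = G u v w) (hGdeg : ∀ u v, ∑ w, G u v w ≤ d)
    (hGfst : ∀ v, ∑ u, ∑ w, G u v w ≤ κ) (hGslice : ∀ u, ∑ v, ∑ w, G u v w ≤ κ) (hκ : 0 < κ)
    (hικ : Fintype.card ι ≤ κ) (hτ : 0 < τ)
    (hL : (Fintype.card L ^ 2 - 1) * (κ / Fintype.card V) ≤ d) (hR : Even R)
    (hR0 : R ≠ 0) (hcard : ((Fintype.card V : ℝ) ^ Fintype.card L) ^ 2 ≤ 2 ^ R)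
    (hx : ∀ b v, |x b v| = 1) :
    𝔼 b, ∑ i, pmo (b i) * ∑ u, sliceForm (g i) (x b) u * sliceForm H (x b) u ≤
      (8 * √(R * (τ * Fintype.card V / (Fintype.card L ^ 2 * κ ^ 2))) + 4 * d / τ) *
        (Fintype.card V * κ ^ 2) := by
  have hG (u v w) : 0 ≤ G u v w := (abs_nonneg _).trans (hHG u v w)
  have hd : 0 ≤ d := (sum_nonneg fun w _ ↦ hG (Classical.arbitrary V) _ w).trans
    (hGdeg _ (Classical.arbitrary V))
  have hsnd (i v) := sum_snd_localDegree_pairKernel_le (hg i) hκ.le hGslice v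
  have htot : ∑ i, ∑ v, ∑ w, localDegree (pairKernel (g i) G) v w ≤ Fintype.card V * κ ^ 2 := by
    calc ∑ i, ∑ v, ∑ w, localDegree (pairKernel (g i) G) v w ≤ ∑ _i : ι, ∑ _v : V, κ := by
          gcongr with i _ v
          exact hsnd i v
      _ = Fintype.card V * (Fintype.card ι * κ) := by
          simp only [sum_const, card_univ, nsmul_eq_mul]
          ring
      _ ≤ Fintype.card V * κ ^ 2 := by
          rw [sq]
          gcongr
  simp only [← quarticForm_pairKernel]
  refine expect_quarticForm_le (M := fun i ↦ pairKernel (g i) G) (fun i v v' w w' ↦ ?_)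
    (fun i v v' w w' ↦ ?_) (fun i v v' w w' ↦ ?_) hκ hτ
    (fun i ↦ localDegree_pairKernel_le (hg i) hd hGdeg)
    (fun i ↦ sum_fst_localDegree_pairKernel_le (hg i) hG hGfst) hsnd htot hL hR hR0 hcard hx
  · refine (abs_sum_le_sum_abs _ _).trans (sum_le_sum fun u _ ↦ ?_)
    rw [abs_mul, abs_of_nonneg ((hg i).nonneg u v v')]
    exact mul_le_mul_of_nonneg_left (hHG u w w') ((hg i).nonneg u v v')
  · exact sum_congr rfl fun u _ ↦ by rw [hgsymm, hHsymm]
  · exact sum_congr rfl fun u _ ↦ by rw [hgsymm, hGsymm]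

variable [Nonempty ι]

/-- Once the signs outside `s` are fixed, the colours outside `s` act as a single tensor. -/
lemma expect_sliceForm_mul_sliceForm_compl_le (s : Finset ι)
    (hg : ∀ i, IsFractionalMatching (g i)) (hsymm : ∀ i u v w, g i u w v = g i u v w)
    (hdeg : ∀ u v, ∑ w, ∑ i, g i u v w ≤ d) (hτ : 0 < τ)
    (hL : (Fintype.card L ^ 2 - 1) * ((Fintype.card ι : ℝ) / Fintype.card V) ≤ d) (hR : Even R)
    (hR0 : R ≠ 0) (hcard : ((Fintype.card V : ℝ) ^ Fintype.card L) ^ 2 ≤ 2 ^ R)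
    (hx : ∀ b v, |x b v| = 1) :
    𝔼 b, ∑ u, (∑ i ∈ s, pmo (b i) * sliceForm (g i) (x b) u) *
        ∑ j ∈ sᶜ, pmo (b j) * sliceForm (g j) (x b) u ≤
      (8 * √(R * (τ * Fintype.card V / (Fintype.card L ^ 2 * (Fintype.card ι : ℝ) ^ 2))) +
        4 * d / τ) * (Fintype.card V * (Fintype.card ι : ℝ) ^ 2) := by
  rw [← expect_piecewise s]
  refine expect_le univ_nonempty fun b' _ ↦ ?_
  simp only [sum_sliceForm_mul_sum_compl_piecewise]
  refine expect_sliceForm_mul_sliceForm_le (κ := Fintype.card ι) (G := ∑ j, g j) (fun i ↦ ?_)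
    (fun i u v w ↦ ?_) (fun u v w ↦ ?_) (fun u v w ↦ ?_) (fun u v w ↦ ?_) (fun u v ↦ ?_)
    (fun v ↦ ?_) (fun u ↦ ?_) (by positivity) le_rfl hτ hL hR hR0 hcard fun b ↦ hx _
  · exact (hg i).mono (fun u v w ↦ by split_ifs <;> simp [(hg i).nonneg]) fun u v w ↦ by
      split_ifs <;> simp [(hg i).nonneg]
  · split_ifs
    · exact hsymm i u v w
    · rfl
  · simp only [Finset.sum_apply, Pi.smul_apply, smul_eq_mul]
    refine (abs_sum_le_sum_abs _ _).trans ?_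
    simp only [abs_mul, abs_pmo, one_mul, abs_of_nonneg ((hg _).nonneg u v w)]
    exact sum_le_univ_sum_of_nonneg fun j ↦ (hg j).nonneg u v w
  · simp only [Finset.sum_apply, Pi.smul_apply, hsymm]
  · simp only [Finset.sum_apply, hsymm]
  · simpa only [Finset.sum_apply] using hdeg u v
  · simpa only [Finset.sum_apply] using sum_sum_sum_le_card fun i ↦ (hg i).sum_snd_le v
  · simpa only [Finset.sum_apply] using sum_sum_sum_le_card fun i ↦ (hg i).sum_fst_le u

lemma expect_sum_sq_le_of_light (hg : ∀ i, IsFractionalMatching (g i))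
    (hsymm : ∀ i u v w, g i u w v = g i u v w) (hdeg : ∀ u v, ∑ w, ∑ i, g i u v w ≤ d) (hτ : 0 < τ)
    (hL : (Fintype.card L ^ 2 - 1) * ((Fintype.card ι : ℝ) / Fintype.card V) ≤ d) (hR : Even R)
    (hR0 : R ≠ 0) (hcard : ((Fintype.card V : ℝ) ^ Fintype.card L) ^ 2 ≤ 2 ^ R)
    (hx : ∀ b v, |x b v| = 1) :
    𝔼 b, ∑ u, (∑ i, pmo (b i) * sliceForm (g i) (x b) u) ^ 2 ≤
      4 * ((8 * √(R * (τ * Fintype.card V / (Fintype.card L ^ 2 * (Fintype.card ι : ℝ) ^ 2))) +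
        4 * d / τ) * (Fintype.card V * (Fintype.card ι : ℝ) ^ 2)) +
        Fintype.card V * Fintype.card ι := by
  set y : (ι → Bool) → V → ι → ℝ := fun b u i ↦ pmo (b i) * sliceForm (g i) (x b) u
  have hsplit (b : ι → Bool) (u : V) : (∑ i, y b u i) ^ 2 =
      4 * (𝔼 c : ι → Bool, (∑ i with c i, y b u i) * ∑ j with ¬c j, y b u j) +
        ∑ i, y b u i ^ 2 := by
    rw [expect_sum_mul_sum_compl]
    ring
  have hdiag (b : ι → Bool) : ∑ u, ∑ i, y b u i ^ 2 ≤ Fintype.card V * Fintype.card ι := by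
    calc ∑ u, ∑ i, y b u i ^ 2 ≤ ∑ _u : V, ∑ _i : ι, 1 := by
          gcongr with u _ i
          rw [sq_le_one_iff_abs_le_one, abs_mul, abs_pmo, one_mul]
          exact (abs_sliceForm_le (hg i).nonneg (hx b) u).trans ((hg i).sum_fst_le u)
      _ = Fintype.card V * Fintype.card ι := by simp
  change 𝔼 b, ∑ u, (∑ i, y b u i) ^ 2 ≤ _
  simp only [hsplit, sum_add_distrib, expect_add_distrib, ← mul_sum, ← mul_expect]
  gcongr
  · simp only [← expect_sum_comm]
    rw [expect_comm]
    refine expect_le univ_nonempty fun c _ ↦ ?_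
    simp only [← compl_filter]
    exact expect_sliceForm_mul_sliceForm_compl_le _ hg hsymm hdeg hτ hL hR hR0 hcard hx
  · exact expect_le univ_nonempty fun b _ ↦ hdiag b

theorem sq_correlation_le_of_light (hg : ∀ i, IsFractionalMatching (g i))
    (hsymm : ∀ i u v w, g i u w v = g i u v w) (hdeg : ∀ u v, ∑ w, ∑ i, g i u v w ≤ d) (hτ : 0 < τ)
    (hL : (Fintype.card L ^ 2 - 1) * ((Fintype.card ι : ℝ) / Fintype.card V) ≤ d) (hR : Even R)
    (hR0 : R ≠ 0) (hcard : ((Fintype.card V : ℝ) ^ Fintype.card L) ^ 2 ≤ 2 ^ R)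
    (hx : ∀ b v, |x b v| = 1) :
    correlation g x ^ 2 ≤
      (4 * (8 * √(R * (τ * Fintype.card V / (Fintype.card L ^ 2 * (Fintype.card ι : ℝ) ^ 2))) +
        4 * d / τ) + 1 / Fintype.card ι) * (Fintype.card V * Fintype.card ι) ^ 2 := by
  set n := (Fintype.card V : ℝ) with hn
  set k := (Fintype.card ι : ℝ)
  have hk : k ≠ 0 := Nat.cast_ne_zero.2 Fintype.card_ne_zero
  set E := 8 * √(R * (τ * n / (Fintype.card L ^ 2 * k ^ 2))) + 4 * d / τ
  set T : (ι → Bool) → V → ℝ := fun b u ↦ ∑ i, pmo (b i) * sliceForm (g i) (x b) u with hT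
  have hcorr : correlation g x = 𝔼 b, ∑ u, x b u * T b u := by
    refine expect_congr rfl fun b _ ↦ ?_
    simp only [cubicForm_eq_sum_sliceForm, hT, mul_sum, mul_left_comm (pmo _)]
    exact sum_comm
  have hsq (b : ι → Bool) : (∑ u, x b u * T b u) ^ 2 ≤ n * ∑ u, T b u ^ 2 := by
    refine (sum_mul_sq_le_sq_mul_sq _ _ _).trans_eq ?_
    simp only [← sq_abs (x b _), hx, one_pow, sum_const, card_univ, nsmul_one, hn]
  calc correlation g x ^ 2 ≤ 𝔼 b, (∑ u, x b u * T b u) ^ 2 :=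
        hcorr ▸ expect_pow_le_pow_of_even _ even_two
    _ ≤ 𝔼 b, n * ∑ u, T b u ^ 2 := expect_le_expect fun b _ ↦ hsq b
    _ = n * 𝔼 b, ∑ u, T b u ^ 2 := (mul_expect ..).symm
    _ ≤ n * (4 * (E * (n * k ^ 2)) + n * k) := by
        gcongr
        exact expect_sum_sq_le_of_light hg hsymm hdeg hτ hL hR hR0 hcard hx
    _ = (4 * E + 1 / k) * (n * k) ^ 2 := by
        field_simp

end Light

section Combination

variable {ι V : Type*}

/-- The part of the 3-tensor `g` supported on the triples satisfying `P`. -/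
def restrictTriples (P : V → V → V → Prop) (g : V → V → V → ℝ) (u v w : V) : ℝ :=
  if P u v w then g u v w else 0

section

variable {P : V → V → V → Prop} {g : V → V → V → ℝ}

lemma restrictTriples_nonneg (hg : ∀ u v w, 0 ≤ g u v w) (u v w : V) :
    0 ≤ restrictTriples P g u v w := by
  rw [restrictTriples]
  split_ifs
  exacts [hg u v w, le_rfl]

lemma restrictTriples_le (hg : ∀ u v w, 0 ≤ g u v w) (u v w : V) :
    restrictTriples P g u v w ≤ g u v w := by
  rw [restrictTriples]
  split_ifs
  exacts [le_rfl, hg u v w]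

end

variable [Fintype ι] [Fintype V]

lemma cubicForm_eq_light_add_heavy {g : V → V → V → ℝ} (hg : IsSymmTensor g) {A : V → V → Prop}
    (hA : ∀ v w, A v w ↔ A w v) (x : V → ℝ) :
    cubicForm g x = cubicForm (restrictTriples (fun u v w ↦ A u v ∧ A u w) g) x +
      (cubicForm (restrictTriples (fun _ v w ↦ ¬A v w) g) x +
        cubicForm (restrictTriples (fun u v w ↦ A u v ∧ ¬A v w) g) x) := by
  rw [← cubicForm_rotate (restrictTriples (fun _ v w ↦ ¬A v w) g),
    ← cubicForm_swap (restrictTriples (fun u v w ↦ A u v ∧ ¬A v w) g), ← cubicForm_add,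
    ← cubicForm_add]
  congr 1
  ext u v w
  simp only [Pi.add_apply, restrictTriples, hA v u, ← hg.rotate w u v, hg.swap_fst_snd u v w]
  by_cases huv : A u v <;> by_cases huw : A u w <;> simp [huv, huw]

lemma codegree_comm {h : ι → V → V → V → ℝ} (hsymm : ∀ i, IsSymmTensor (h i)) (v w : V) :
    codegree h v w = codegree h w v :=
  sum_congr rfl fun i _ ↦ sum_congr rfl fun u _ ↦ (hsymm i).swap_snd_trd u w v

/-- The light part of the family `h`: the triples whose two pairs at the first vertex have codegree
at most `d`. -/
def lightPart (h : ι → V → V → V → ℝ) (d : ℝ) (i : ι) : V → V → V → ℝ :=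
  restrictTriples (fun u v w ↦ codegree h u v ≤ d ∧ codegree h u w ≤ d) (h i)

variable {h : ι → V → V → V → ℝ}

lemma sum_lightPart_le (hh : ∀ i u v w, 0 ≤ h i u v w) (hsymm : ∀ i, IsSymmTensor (h i)) {d : ℝ}
    (hd : 0 ≤ d) (u v : V) : ∑ w, ∑ i, lightPart h d i u v w ≤ d := by
  by_cases huv : codegree h u v ≤ d
  · refine le_trans ?_ huv
    rw [codegree, sum_comm]
    gcongr with i _ w
    rw [← (hsymm i).rotate w u v]
    exact restrictTriples_le (hh i) u v w
  · have hzero (i w) : lightPart h d i u v w = 0 := if_neg fun h ↦ huv h.1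
    simpa only [hzero, sum_const_zero] using hd

variable [DecidableEq ι] [Nonempty V] [Nonempty ι] {β d : ℝ} {R : ℕ} {x : (ι → Bool) → V → ℝ}

lemma correlation_lightPart_lt {L : Type*} [Fintype L] [Nonempty L]
    (hh : ∀ i, IsFractionalMatching (h i)) (hsymm : ∀ i, IsSymmTensor (h i)) (hβ : 0 < β)
    (hd : 0 < d) (hιβ : 16 ≤ β ^ 2 * Fintype.card ι)
    (hL : (Fintype.card L ^ 2 - 1) * ((Fintype.card ι : ℝ) / Fintype.card V) ≤ d) (hR : Even R)
    (hR0 : R ≠ 0) (hcard : ((Fintype.card V : ℝ) ^ Fintype.card L) ^ 2 ≤ 2 ^ R)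
    (hRβ : R * (256 * d / β ^ 2 * Fintype.card V /
      (Fintype.card L ^ 2 * (Fintype.card ι : ℝ) ^ 2)) ≤ (β ^ 2 / 512) ^ 2)
    (hx : ∀ b v, |x b v| = 1) :
    correlation (lightPart h d) x < β / 2 * (Fintype.card V * Fintype.card ι) := by
  have hlight := sq_correlation_le_of_light (τ := 256 * d / β ^ 2) (d := d) (g := lightPart h d)
    (fun i ↦ (hh i).mono (restrictTriples_nonneg (hh i).nonneg) (restrictTriples_le (hh i).nonneg))
    (fun i u v w ↦ by
      simp only [lightPart, restrictTriples, (hsymm i).swap_snd_trd u v w,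
        and_comm (a := codegree h u v ≤ d)])
    (sum_lightPart_le (fun i ↦ (hh i).nonneg) hsymm hd.le) (by positivity) hL hR hR0 hcard hx
  set N := (Fintype.card V * Fintype.card ι : ℝ)
  have : 0 < N := by positivity
  have hsqrt := Real.sqrt_le_iff.2 ⟨by positivity, hRβ⟩
  have hloss : 4 * d / (256 * d / β ^ 2) = β ^ 2 / 64 := by
    field_simp
    norm_num
  have hdiag : 1 / (Fintype.card ι : ℝ) ≤ β ^ 2 / 16 := by
    rw [div_le_div_iff₀ (by positivity) (by norm_num)]
    linarith
  refine lt_of_pow_lt_pow_left₀ 2 (by positivity) ?_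
  calc correlation (lightPart h d) x ^ 2 ≤ 3 / 16 * β ^ 2 * N ^ 2 := by
        refine hlight.trans ?_
        gcongr
        rw [hloss]
        linarith
    _ < 1 / 4 * β ^ 2 * N ^ 2 := by
        linarith [show 0 < β ^ 2 * N ^ 2 by positivity]
    _ = (β / 2 * N) ^ 2 := by ring

theorem correlation_lt {L : Type*} [Fintype L] [Nonempty L]
    (hh : ∀ i, IsFractionalMatching (h i)) (hsymm : ∀ i, IsSymmTensor (h i)) (hβ : 0 < β)
    (hd : 0 < d) (hdι : d ≤ Fintype.card ι) {R' : ℕ} (hR : Even R) (hR0 : R ≠ 0) (hR' : Even R')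
    (hR'0 : R' ≠ 0) (hdβ : 256 * R' ≤ β ^ 2 * d) (hιβ : 16 ≤ β ^ 2 * Fintype.card ι)
    (hV : (Fintype.card V + Fintype.card V ^ 2 : ℝ) ≤ 2 ^ R')
    (hL : (Fintype.card L ^ 2 - 1) * ((Fintype.card ι : ℝ) / Fintype.card V) ≤ d)
    (hcard : ((Fintype.card V : ℝ) ^ Fintype.card L) ^ 2 ≤ 2 ^ R)
    (hRβ : R * (256 * d / β ^ 2 * Fintype.card V /
      (Fintype.card L ^ 2 * (Fintype.card ι : ℝ) ^ 2)) ≤ (β ^ 2 / 512) ^ 2)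
    (hx : ∀ b v, |x b v| = 1) :
    correlation h x < β * (Fintype.card V * Fintype.card ι) := by
  have hlight := correlation_lightPart_lt hh hsymm hβ hd hιβ hL hR hR0 hcard hRβ hx
  set N := (Fintype.card V * Fintype.card ι : ℝ)
  set A : V → V → Prop := fun v w ↦ codegree h v w ≤ d
  have hsplit : correlation h x = correlation (lightPart h d) x +
      (correlation (fun i ↦ restrictTriples (fun _ v w ↦ ¬A v w) (h i)) x +
        correlation (fun i ↦ restrictTriples (fun u v w ↦ A u v ∧ ¬A v w) (h i)) x) := by
    simp only [← correlation_add]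
    refine expect_congr rfl fun b _ ↦ sum_congr rfl fun i _ ↦ congrArg _ ?_
    simp only [Pi.add_apply, cubicForm_add]
    exact cubicForm_eq_light_add_heavy (hsymm i)
      (fun v w ↦ by rw [codegree_comm hsymm v w]) _
  have hsqrt : √(R' / d) ≤ β / 16 :=
    Real.sqrt_le_iff.2 ⟨by positivity, (div_le_iff₀ hd).2 (by linarith)⟩
  have hheavy {P : V → V → V → Prop} (hP : ∀ u v w, P u v w → ¬A v w) :
      correlation (fun i ↦ restrictTriples P (h i)) x ≤ β / 4 * N := by
    calc correlation (fun i ↦ restrictTriples P (h i)) x ≤ 4 * √(R' / d) * N :=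
          correlation_le_of_heavy hh (fun i ↦ restrictTriples_nonneg (hh i).nonneg)
            (fun i ↦ restrictTriples_le (hh i).nonneg) hd hdι
            (fun i u v w hvw ↦ if_neg fun huvw ↦ hP u v w huvw hvw) hR' hR'0 hV
            fun b v ↦ (hx b v).le
      _ ≤ 4 * (β / 16) * N := by gcongr
      _ = β / 4 * N := by ring
  rw [hsplit]
  linarith [hheavy (P := fun _ v w ↦ ¬A v w) fun _ _ _ ↦ id,
    hheavy (P := fun u v w ↦ A u v ∧ ¬A v w) fun _ _ _ ↦ And.right]

end Combination

section Parameters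

lemma exists_even_near {y : ℝ} (hy : 2 ≤ y) :
    ∃ R : ℕ, Even R ∧ R ≠ 0 ∧ y ≤ R ∧ R ≤ 2 * y := by
  have hpos : 0 < ⌈y / 2⌉₊ := Nat.ceil_pos.2 (by linarith)
  refine ⟨2 * ⌈y / 2⌉₊, even_two_mul _, by omega, ?_, ?_⟩ <;> push_cast
  · linarith [Nat.le_ceil (y / 2)]
  · linarith [Nat.ceil_lt_add_one (show 0 ≤ y / 2 by linarith)]

lemma exists_natCast_sq_near {y : ℝ} (hy : 0 < y) :
    ∃ ℓ : ℕ, ℓ ≠ 0 ∧ y ≤ ℓ ^ 2 ∧ (ℓ : ℝ) ^ 2 - 1 ≤ 3 * y := by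
  have hsqrt : 0 < √y := Real.sqrt_pos.2 hy
  have hsq : √y ^ 2 = y := Real.sq_sqrt hy.le
  refine ⟨⌈√y⌉₊, (Nat.ceil_pos.2 hsqrt).ne',
    (Real.sqrt_le_left (by positivity)).1 (Nat.le_ceil _), ?_⟩
  obtain h1 | h1 := le_or_gt (√y) 1
  · have hceil : (⌈√y⌉₊ : ℝ) ≤ 1 := by exact_mod_cast Nat.ceil_le.2 (by simpa using h1)
    nlinarith
  · nlinarith [Nat.ceil_lt_add_one hsqrt.le]

lemma pow_le_two_pow_of_log_le {n m N : ℕ} (hn : 0 < n) (h : 2 * m * Real.log n ≤ N) :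
    (n : ℝ) ^ m ≤ 2 ^ N := by
  have : (0 : ℝ) < n := by exact_mod_cast hn
  rw [← Real.log_le_log_iff (by positivity) (by positivity), Real.log_pow, Real.log_pow]
  calc m * Real.log n = 2 * m * Real.log n * (1 / 2) := by ring
    _ ≤ N * Real.log 2 := by gcongr; linarith [Real.log_two_gt_d9]

variable {k n l β : ℝ}

lemma degree_cutoff_le (hk : 0 ≤ k) (hn : 2 ≤ n) (hl : 0.69 ≤ l) (hβ : 0 < β) (hβ1 : β ≤ 1)
    (hlarge : (2 ^ 30 * 3072) ^ 2 * n * l ^ 6 < k ^ 3 * β ^ 16) : 3072 * l / β ^ 2 ≤ k := by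
  have hl0 : 0 < l := by linarith
  refine le_of_pow_le_pow_left₀ three_ne_zero hk (le_of_mul_le_mul_right ?_ (pow_pos hβ 16))
  calc (3072 * l / β ^ 2) ^ 3 * β ^ 16 = (3072 * l) ^ 3 * β ^ 10 := by field_simp
    _ ≤ (3072 * l) ^ 3 * 1 := by gcongr; exact pow_le_one₀ hβ.le hβ1
    _ ≤ (2 ^ 30 * 3072) ^ 2 * 2 * (l ^ 3 * 0.69 ^ 3) := by
        linarith [pow_pos hl0 3]
    _ ≤ (2 ^ 30 * 3072) ^ 2 * n * (l ^ 3 * l ^ 3) := by gcongr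
    _ = (2 ^ 30 * 3072) ^ 2 * n * l ^ 6 := by ring
    _ ≤ k ^ 3 * β ^ 16 := hlarge.le

lemma exponent_mul_row_bound_le {ℓ R : ℝ} (hk : 0 < k) (hn : 0 < n) (hl : 0.69 ≤ l) (hβ : 0 < β)
    (hℓ : 0 < ℓ) (hnℓ : n ≤ ℓ ^ 2 * k) (hR : R ≤ 2 * (4 * ℓ * l))
    (hlarge : (2 ^ 30 * 3072) ^ 2 * n * l ^ 6 < k ^ 3 * β ^ 16) :
    R * (256 * (3072 * l / β ^ 2) / β ^ 2 * n / (ℓ ^ 2 * k ^ 2)) ≤ (β ^ 2 / 512) ^ 2 := by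
  have hl0 : 0 < l := by linarith
  have hroot : 2 ^ 29 * 3072 * (l ^ 2 * n) ≤ β ^ 8 * (ℓ * k ^ 2) := by
    refine le_of_pow_le_pow_left₀ two_ne_zero (by positivity) ?_
    calc (2 ^ 29 * 3072 * (l ^ 2 * n)) ^ 2 = (2 ^ 29 * 3072) ^ 2 * l ^ 4 * n ^ 2 * 1 := by ring
      _ ≤ (2 ^ 29 * 3072) ^ 2 * l ^ 4 * n ^ 2 * (4 * l ^ 2) := by gcongr; nlinarith
      _ = n * ((2 ^ 30 * 3072) ^ 2 * n * l ^ 6) := by ring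
      _ ≤ ℓ ^ 2 * k * (k ^ 3 * β ^ 16) := by gcongr
      _ = (β ^ 8 * (ℓ * k ^ 2)) ^ 2 := by ring
  calc R * (256 * (3072 * l / β ^ 2) / β ^ 2 * n / (ℓ ^ 2 * k ^ 2))
      ≤ 2 * (4 * ℓ * l) * (256 * (3072 * l / β ^ 2) / β ^ 2 * n / (ℓ ^ 2 * k ^ 2)) := by gcongr
    _ = 2 ^ 29 * 3072 * (l ^ 2 * n) / (2 ^ 18 * β ^ 4 * (ℓ * k ^ 2)) := by
        field_simp
        norm_num
    _ ≤ β ^ 8 * (ℓ * k ^ 2) / (2 ^ 18 * β ^ 4 * (ℓ * k ^ 2)) := by gcongr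
    _ = (β ^ 2 / 512) ^ 2 := by
        field_simp
        norm_num

end Parameters

section CubeBound

variable {ι V : Type*} [Fintype ι] [DecidableEq ι] [Fintype V] {h : ι → V → V → V → ℝ}
  {x : (ι → Bool) → V → ℝ}

lemma correlation_le (hh : ∀ i, IsFractionalMatching (h i)) (hx : ∀ b v, |x b v| = 1) :
    correlation h x ≤ Fintype.card V * Fintype.card ι := by
  have hform (i b) : |cubicForm (h i) (x b)| ≤ Fintype.card V := by
    calc |cubicForm (h i) (x b)|
        ≤ ∑ u, ∑ v, ∑ w, |h i u v w * x b u * x b v * x b w| :=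
          (abs_sum_le_sum_abs _ _).trans <| sum_le_sum fun u _ ↦
            (abs_sum_le_sum_abs _ _).trans <| sum_le_sum fun v _ ↦ abs_sum_le_sum_abs _ _
      _ = ∑ u, ∑ v, ∑ w, h i u v w := by
          simp only [abs_mul, hx, mul_one, abs_of_nonneg ((hh i).nonneg _ _ _)]
      _ ≤ Fintype.card V := (hh i).sum_le
  refine expect_le univ_nonempty fun b _ ↦ ?_
  calc ∑ i, pmo (b i) * cubicForm (h i) (x b) ≤ ∑ _i : ι, (Fintype.card V : ℝ) :=
        sum_le_sum fun i _ ↦ (le_abs_self _).trans <| by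
          rw [abs_mul, abs_pmo, one_mul]
          exact hform i b
    _ = Fintype.card V * Fintype.card ι := by simp [mul_comm]

theorem cube_le_of_correlation [Nonempty ι] {β : ℝ} (hV : 2 ≤ Fintype.card V)
    (hh : ∀ i, IsFractionalMatching (h i)) (hsymm : ∀ i, IsSymmTensor (h i))
    (hx : ∀ b v, |x b v| = 1) (hβ : 0 < β)
    (hcorr : β * (Fintype.card V * Fintype.card ι) ≤ correlation h x) :
    (Fintype.card ι : ℝ) ^ 3 ≤
      (2 ^ 30 * 3072) ^ 2 * Fintype.card V * Real.log (Fintype.card V) ^ 6 / β ^ 16 := by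
  have : Nonempty V := Fintype.card_pos_iff.1 (by omega)
  have hn : 0 < Fintype.card V := by omega
  set k := (Fintype.card ι : ℝ)
  set n := (Fintype.card V : ℝ)
  set l := Real.log n
  have hk0 : 0 < k := by positivity
  have hn2 : 2 ≤ n := Nat.ofNat_le_cast.2 hV
  have hl : 0.69 ≤ l := by
    linarith [Real.log_two_gt_d9, Real.log_le_log two_pos hn2]
  have hβ1 : β ≤ 1 := le_of_mul_le_mul_right
    (by simpa using hcorr.trans (correlation_le hh hx)) (show 0 < n * k by positivity)
  by_contra! hlarge
  rw [div_lt_iff₀ (by positivity)] at hlarge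
  -- The heavy triples need `256 * R' ≤ β ^ 2 * d`, and `R' ≤ 12 * l`.
  set d := 3072 * l / β ^ 2
  have hdk : d ≤ k := degree_cutoff_le hk0.le hn2 hl hβ hβ1 hlarge
  have hβd : β ^ 2 * d = 3072 * l := mul_div_cancel₀ _ (by positivity)
  have hd3 : 3 ≤ d := by
    nlinarith [pow_le_one₀ hβ.le hβ1 (n := 2)]
  obtain ⟨R', hR', hR'0, hR'1, hR'2⟩ := exists_even_near (y := 6 * l) (by linarith)
  obtain ⟨ℓ, hℓ, hnℓ, hℓn⟩ := exists_natCast_sq_near (y := n / k) (by positivity)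
  have hℓ1 : (1 : ℝ) ≤ ℓ := Nat.one_le_cast.2 (Nat.pos_of_ne_zero hℓ)
  obtain ⟨R, hR, hR0, hR1, hR2⟩ := exists_even_near (y := 4 * ℓ * l) (by nlinarith)
  have : NeZero ℓ := ⟨hℓ⟩
  refine hcorr.not_gt (correlation_lt (L := Fin ℓ) (d := d) hh hsymm hβ (by positivity) hdk
    hR hR0 hR' hR'0 (by linarith) (by nlinarith) ?_ ?_ ?_ ?_ hx)
  · calc n + n ^ 2 ≤ n ^ 3 := by nlinarith
      _ ≤ 2 ^ R' := pow_le_two_pow_of_log_le hn (by push_cast; linarith)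
  · rw [Fintype.card_fin]
    calc ((ℓ : ℝ) ^ 2 - 1) * (k / n) ≤ 3 * (n / k) * (k / n) := by gcongr
      _ = 3 := by field_simp
      _ ≤ d := hd3
  · rw [Fintype.card_fin, ← pow_mul]
    exact pow_le_two_pow_of_log_le hn (by push_cast; linarith)
  · rw [Fintype.card_fin]
    exact exponent_mul_row_bound_le hk0 (by positivity) hl hβ (by positivity)
      ((div_le_iff₀ hk0).1 hnℓ) hR2 hlarge

end CubeBound

section Reduction

lemma expect_pmo_mul_prod_pmo {ι V : Type*} [Fintype ι] [DecidableEq ι]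
    (y : (ι → Bool) → V → Bool) (i : ι) (C : Finset V) :
    𝔼 b, pmo (b i) * ∏ v ∈ C, pmo (y b v) =
      2 * (#{b | pmo (b i) = ∏ v ∈ C, pmo (y b v)} / 2 ^ Fintype.card ι) - 1 := by
  have hindicator (b : ι → Bool) : pmo (b i) * ∏ v ∈ C, pmo (y b v) =
      2 * (if pmo (b i) = ∏ v ∈ C, pmo (y b v) then 1 else 0) - 1 := by
    have habs : |∏ v ∈ C, pmo (y b v)| = 1 := by
      rw [abs_prod]
      exact prod_eq_one fun v _ ↦ abs_pmo _
    obtain hp | hp := eq_or_eq_neg_of_abs_eq habs <;> rw [hp] <;> cases b i <;> norm_num [pmo]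
  simp only [hindicator]
  rw [expect_sub_distrib, ← mul_expect, Fintype.expect_const, Fintype.expect_eq_sum_div_card,
    sum_boole]
  simp

lemma ne_of_card_insert_insert_eq_three {V : Type*} [DecidableEq V] {u v w : V}
    (h : #{u, v, w} = 3) : u ≠ v ∧ u ≠ w ∧ v ≠ w := by
  have hpair (a b : V) : #{a, b} ≠ 3 := fun hab ↦ by
    have := card_le_two (a := a) (b := b)
    omega
  refine ⟨?_, ?_, ?_⟩ <;> rintro rfl
  · exact hpair u w (by simpa using h)
  · exact hpair v u (by simpa [insert_comm u v] using h)
  · exact hpair u v (by simpa using h)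

/-- The ordered triples spanning a hyperedge of `H`, each with weight `1/2`: a vertex of a 3-uniform
matching lies at the first position of two of them. -/
def tripleWeight {V : Type*} [DecidableEq V] (H : Finset (Finset V)) (u v w : V) : ℝ :=
  if {u, v, w} ∈ H then 1 / 2 else 0

lemma tripleWeight_nonneg {V : Type*} [DecidableEq V] (H : Finset (Finset V)) (u v w : V) :
    0 ≤ tripleWeight H u v w := by
  rw [tripleWeight]
  positivity

lemma isSymmTensor_tripleWeight {V : Type*} [DecidableEq V] (H : Finset (Finset V)) :
    IsSymmTensor (tripleWeight H) where
  swap_fst_snd u v w := by rw [tripleWeight, tripleWeight, insert_comm]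
  swap_snd_trd u v w := by rw [tripleWeight, tripleWeight, pair_comm]

namespace IsMatching

variable {n : ℕ} {H : Finset (Finset (Fin n))}

lemma card_filter_insert_le_two (hH : IsMatching 3 H) (u : Fin n) :
    #{p : Fin n × Fin n | {u, p.1, p.2} ∈ H} ≤ 2 := by
  obtain hempty | ⟨⟨a, b⟩, hab⟩ := eq_empty_or_nonempty {p : Fin n × Fin n | {u, p.1, p.2} ∈ H}
  · simp [hempty]
  refine (card_le_card (t := {(a, b), (b, a)}) ?_).trans card_le_two
  rintro ⟨v, w⟩ hvw
  simp only [mem_filter, mem_univ, true_and] at hab hvw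
  have heq : ({u, v, w} : Finset (Fin n)) = {u, a, b} := by
    by_contra hne
    exact disjoint_left.1 (hH.2 hvw hab hne) (mem_insert_self u {v, w}) (mem_insert_self u {a, b})
  obtain ⟨huv, huw, hvw'⟩ := ne_of_card_insert_insert_eq_three (hH.1 _ hvw)
  have hv : v ∈ ({u, a, b} : Finset (Fin n)) := by simp [← heq]
  have hw : w ∈ ({u, a, b} : Finset (Fin n)) := by simp [← heq]
  simp only [mem_insert, mem_singleton, Prod.mk.injEq] at hv hw ⊢
  grind

lemma isFractionalMatching_tripleWeight (hH : IsMatching 3 H) :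
    IsFractionalMatching (tripleWeight H) := by
  refine .of_isSymmTensor (isSymmTensor_tripleWeight H) (tripleWeight_nonneg H) fun u ↦ ?_
  have hcard : (#{p : Fin n × Fin n | {u, p.1, p.2} ∈ H} : ℝ) ≤ 2 :=
    Nat.cast_le_ofNat.2 (hH.card_filter_insert_le_two u)
  rw [← Fintype.sum_prod_type']
  simp only [tripleWeight, ← sum_filter, sum_const, nsmul_eq_mul]
  linarith

lemma card_le_card_filter_triples (hH : IsMatching 3 H) :
    #H ≤ #{p : Fin n × Fin n × Fin n | {p.1, p.2.1, p.2.2} ∈ H} := by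
  refine card_le_card_of_surjOn (fun p ↦ {p.1, p.2.1, p.2.2}) fun C hC ↦ ?_
  obtain ⟨u, v, w, -, -, -, rfl⟩ := card_eq_three.1 (hH.1 C hC)
  exact ⟨(u, v, w), by simpa using hC, rfl⟩

lemma le_expect_cubicForm_tripleWeight (hH : IsMatching 3 H) {ι : Type*} [Fintype ι]
    [DecidableEq ι] {y : (ι → Bool) → Fin n → Bool} {i : ι} {ε : ℝ} (hε : 0 ≤ ε)
    (hy : ∀ C ∈ H, 2 * ε ≤ 𝔼 b, pmo (b i) * ∏ v ∈ C, pmo (y b v)) :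
    ε * #H ≤ 𝔼 b, pmo (b i) * cubicForm (tripleWeight H) (fun v ↦ pmo (y b v)) := by
  have hterm (u v w : Fin n) : (if {u, v, w} ∈ H then ε else 0) ≤
      𝔼 b, pmo (b i) * (tripleWeight H u v w * pmo (y b u) * pmo (y b v) * pmo (y b w)) := by
    by_cases hmem : {u, v, w} ∈ H
    · obtain ⟨huv, huw, hvw⟩ := ne_of_card_insert_insert_eq_three (hH.1 _ hmem)
      have hcorr := hy _ hmem
      simp only [prod_insert (show u ∉ {v, w} by simp [huv, huw]), prod_pair hvw] at hcorr
      calc (if {u, v, w} ∈ H then ε else 0) = 1 / 2 * (2 * ε) := by rw [if_pos hmem]; ring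
        _ ≤ 1 / 2 * 𝔼 b, pmo (b i) * (pmo (y b u) * (pmo (y b v) * pmo (y b w))) := by gcongr
        _ = _ := by
            rw [mul_expect, tripleWeight, if_pos hmem]
            exact expect_congr rfl fun b _ ↦ by ring
    · simp [tripleWeight, hmem]
  calc ε * #H ≤ ε * #{p : Fin n × Fin n × Fin n | {p.1, p.2.1, p.2.2} ∈ H} := by
        gcongr
        exact hH.card_le_card_filter_triples
    _ = ∑ u, ∑ v, ∑ w, if {u, v, w} ∈ H then ε else 0 := by
        rw [← nsmul_eq_mul', ← sum_const, sum_filter]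
        simp only [Fintype.sum_prod_type]
    _ ≤ _ := sum_le_sum fun u _ ↦ sum_le_sum fun v _ ↦ sum_le_sum fun w _ ↦ hterm u v w
    _ = _ := by simp only [cubicForm, mul_sum, expect_sum_comm]

end IsMatching

end Reduction

/-- **Main Theorem**: near-cubic lower bound for `3`-query locally decodable codes, in
normal form: if `Enc : {-1,1}^k → {-1,1}^n` is `(3, δ, ε)`-normally decodable, then
`k³ ≤ c · n · (log n)⁶ / (ε¹⁶ δ¹⁶)` for an absolute constant `c > 0`. -/
theorem three_ldc_cubic_lower_bound :
    ∃ c : ℝ, 0 < c ∧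
      ∀ (k n : ℕ) (δ ε : ℝ) (Enc : (Fin k → Bool) → Fin n → Bool),
        0 < k → 2 ≤ n → 0 < δ → 0 < ε →
        NormallyDecodable 3 k n δ ε Enc →
        (k : ℝ) ^ 3 ≤ c * n * Real.log n ^ 6 / (ε ^ 16 * δ ^ 16) := by
  refine ⟨(2 ^ 30 * 3072) ^ 2, by positivity, ?_⟩
  rintro k n δ ε Enc hk hn hδ hε ⟨H, hmatch, hsize, hdec⟩
  have : Nonempty (Fin k) := ⟨⟨0, hk⟩⟩
  have hedge (i) : ∀ C ∈ H i, 2 * ε ≤ 𝔼 b, pmo (b i) * ∏ v ∈ C, pmo (Enc b v) := fun C hC ↦ by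
    rw [expect_pmo_mul_prod_pmo, Fintype.card_fin]
    linarith [hdec i C hC]
  have hcorr : ε * δ * (n * k) ≤
      correlation (fun i ↦ tripleWeight (H i)) fun b v ↦ pmo (Enc b v) := by
    calc ε * δ * (n * k) = ∑ _i : Fin k, ε * (δ * n) := by simp; ring
      _ ≤ ∑ i, ε * #(H i) := by gcongr; exact hsize _
      _ ≤ ∑ i, 𝔼 b, pmo (b i) * cubicForm (tripleWeight (H i)) fun v ↦ pmo (Enc b v) :=
        sum_le_sum fun i _ ↦ (hmatch i).le_expect_cubicForm_tripleWeight hε.le (hedge i)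
      _ = _ := (expect_sum_comm ..).symm
  rw [← mul_pow]
  simpa only [Fintype.card_fin] using cube_le_of_correlation (by simpa using hn)
    (fun i ↦ (hmatch i).isFractionalMatching_tripleWeight)
    (fun i ↦ isSymmTensor_tripleWeight (H i)) (fun b v ↦ abs_pmo _) (mul_pos hε hδ)
    (by simpa only [Fintype.card_fin] using hcorr)
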